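/- Let n be a natural number. Then the following are equivalent: (i) any n elements of every f-generating set {x_1,...,x_s} of a with respect to M with s ≥ n form an unconditioned a-weak sequence on M; (ii) there exists an f-generating set {x_1,...,x_s} of a with respect to M such that s ≥ n and any n elements in it form an unconditioned a-weak sequence on M; (iii) there exists an f-generating set {x_1,...,x_s} of a with respect to M with s ≥ n such that the canonical map λ^i_M : H^i(x_1,...,x_s; M) → H^i_a(M) from Koszul cohomology to local cohomology is surjective for all 0 ≤ i ≤ n-1. -/

import Mathlib

/-!
Formalization of a statement from "A theory of relative generalized Cohen-Macaulay modules"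
by Divaani-Aazar, Ghanbari Doust, Tousi and Zakeri.

Throughout, `R` is a commutative Noetherian ring and `M` a finitely generated `R`-module.
Conventions used below:
* `locH I i M` is the local cohomology module `H^i_I(M)` (Mathlib's `localCohomology`).
* Conditions `cd(I,M) = c`, `ara(I,M) = n`, `f_I(M) = f`, `grade(I,M) = r` are expressed by
  the predicates `IsCd`, `IsAra`, `IsFinDim`, `IsGrade`.
* Sequences are given as functions `Fin r → R`; `pSpan M x i = ⟨x_0,…,x_{i-1}⟩M`.
* Koszul (co)homology is defined via the explicit (co)chain complex on the `p`-element
  subsets of `{0,…,n-1}`, and the canonical map `λ^i` into local cohomology is the structure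
  map (at exponent 1) into the direct limit of Koszul cohomologies of powers of the sequence,
  which is the realization of `H^i_{⟨x⟩}(M)` used in the paper (2.1(iv)).
-/

open CategoryTheory

noncomputable section

variable {R : Type} [CommRing R]

/-! ### Sequences: prefix spans, weak sequences, filter regular sequences, d-sequences -/

/-- `pSpan M x i` is the submodule `⟨x_0, …, x_{i-1}⟩M` of `M`. -/
def pSpan (M : Type) [AddCommGroup M] [Module R M] {r : ℕ} (x : Fin r → R) (i : Fin r) :
    Submodule R M :=
  Ideal.span (x '' {j | j < i}) • (⊤ : Submodule R M)

/-- `x_1, …, x_r` is an `I`-weak sequence on `M`: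
`(⟨x_1,…,x_{i-1}⟩M :_M x_i) ⊆ (⟨x_1,…,x_{i-1}⟩M :_M I)` for all `i`. -/
def IsWeakSeq (I : Ideal R) (M : Type) [AddCommGroup M] [Module R M] {r : ℕ}
    (x : Fin r → R) : Prop :=
  ∀ i : Fin r, ∀ m : M, x i • m ∈ pSpan M x i → ∀ a ∈ I, a • m ∈ pSpan M x i

/-- `x_1, …, x_r` is an `I`-filter regular sequence on `M`:
`(⟨x_1,…,x_{i-1}⟩M :_M x_i) ⊆ ⋃ₜ (⟨x_1,…,x_{i-1}⟩M :_M I^t)` for all `i`. -/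
def IsFilterRegSeq (I : Ideal R) (M : Type) [AddCommGroup M] [Module R M] {r : ℕ}
    (x : Fin r → R) : Prop :=
  ∀ i : Fin r, ∀ m : M, x i • m ∈ pSpan M x i →
    ∃ t : ℕ, ∀ a ∈ I ^ t, a • m ∈ pSpan M x i

/-- An unconditioned `I`-filter regular sequence: filter regular in any order. -/
def IsUncondFilterRegSeq (I : Ideal R) (M : Type) [AddCommGroup M] [Module R M] {r : ℕ}
    (x : Fin r → R) : Prop :=
  ∀ σ : Equiv.Perm (Fin r), IsFilterRegSeq I M (x ∘ σ)

/-- An unconditioned `I`-weak sequence: all positive powers, in any order, form an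
`I`-weak sequence. -/
def IsUncondWeakSeq (I : Ideal R) (M : Type) [AddCommGroup M] [Module R M] {r : ℕ}
    (x : Fin r → R) : Prop :=
  ∀ σ : Equiv.Perm (Fin r), ∀ α : Fin r → ℕ, (∀ k, 0 < α k) →
    IsWeakSeq I M fun k => x (σ k) ^ α k

/-- `x_1, …, x_r` is a d-sequence on `M`:
`(⟨x_1,…,x_{i-1}⟩M :_M x_i x_j) = (⟨x_1,…,x_{i-1}⟩M :_M x_j)` for all `i ≤ j`. -/
def IsDSeq (M : Type) [AddCommGroup M] [Module R M] {r : ℕ} (x : Fin r → R) : Prop :=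
  ∀ i j : Fin r, i ≤ j → ∀ m : M,
    ((x i * x j) • m ∈ pSpan M x i ↔ x j • m ∈ pSpan M x i)

/-- An u.s.d-sequence on `M`: all positive powers, in any order, form a d-sequence. -/
def IsUSDSeq (M : Type) [AddCommGroup M] [Module R M] {r : ℕ} (x : Fin r → R) : Prop :=
  ∀ σ : Equiv.Perm (Fin r), ∀ α : Fin r → ℕ, (∀ k, 0 < α k) →
    IsDSeq M fun k => x (σ k) ^ α k

/-! ### Koszul cochain complexes, Koszul cohomology, and the canonical maps
`λ^i_M : H^i(x; M) → H^i_{⟨x⟩}(M)` -/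

/-- The degree `p` term of the Koszul cochain complex of `M` on `n` elements:
functions on the `p`-element subsets of `{1, …, n}` with values in `M`
(i.e. `Hom(Λ^p R^n, M)`). -/
abbrev KM (M : Type) (n p : ℕ) : Type := {s : Finset (Fin n) // s.card = p} → M

section Koszul

variable {M : Type} [AddCommGroup M] [Module R M]

/-- The Koszul cochain differential `K^p(x; M) → K^{p+1}(x; M)`. -/
def kd {n : ℕ} (x : Fin n → R) (p : ℕ) : KM M n p →ₗ[R] KM M n (p + 1) where
  toFun f t := ∑ j ∈ t.1.attach,
    ((-1 : R) ^ (t.1.filter (fun a => a < j.1)).card * x j.1) •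
      f ⟨t.1.erase j.1, by rw [Finset.card_erase_of_mem j.2, t.2]; omega⟩
  map_add' f g := by
    funext t
    simp [smul_add, Finset.sum_add_distrib]
  map_smul' r f := by
    funext t
    simp [Finset.smul_sum, smul_comm r]

/-- The transition map of Koszul cochain complexes raising the exponent of the defining
sequence by `e`: in degree `p` it multiplies the component at a subset `s`
by `(∏_{j ∈ s} x_j)^e`. -/
def kt {n : ℕ} (x : Fin n → R) (e p : ℕ) : KM M n p →ₗ[R] KM M n p where
  toFun f s := (∏ j ∈ s.1, x j) ^ e • f s
  map_add' f g := by funext s; simp [smul_add]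
  map_smul' r f := by funext s; simp [smul_comm r]

/-- The transition maps are maps of cochain complexes
`K^•(x^u; M) → K^•(x^{u+e}; M)`. -/
theorem kt_kd {n : ℕ} (x : Fin n → R) (u e p : ℕ) :
    (kt (M := M) x e (p + 1)).comp (kd (fun j => x j ^ u) p)
      = (kd (fun j => x j ^ (u + e)) p).comp (kt x e p) := by
  apply LinearMap.ext; intro f
  funext t
  simp only [LinearMap.comp_apply, kd, kt, LinearMap.coe_mk, AddHom.coe_mk]
  rw [Finset.smul_sum]
  refine Finset.sum_congr rfl fun j _ => ?_
  rw [smul_smul, smul_smul]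
  congr 1
  rw [← Finset.mul_prod_erase t.1 x j.2]
  ring

end Koszul

/-- The `R`-module of Koszul `p`-cocycles of `M` with respect to `y`. -/
def kZ {n : ℕ} (y : Fin n → R) (M : Type) [AddCommGroup M] [Module R M] (p : ℕ) :
    Submodule R (KM M n p) :=
  LinearMap.ker (kd y p)

/-- The `R`-module of Koszul `p`-coboundaries of `M` with respect to `y`. -/
def kB {n : ℕ} (y : Fin n → R) (M : Type) [AddCommGroup M] [Module R M] :
    (p : ℕ) → Submodule R (KM M n p)
  | 0 => ⊥
  | (q + 1) => LinearMap.range (kd y q)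

/-- The `p`-th Koszul cohomology module `H^p(y; M)`: cocycles modulo coboundaries. -/
abbrev Hk {n : ℕ} (y : Fin n → R) (M : Type) [AddCommGroup M] [Module R M] (p : ℕ) :=
  kZ y M p ⧸ ((kB y M p ⊓ kZ y M p).comap (kZ y M p).subtype)

section KoszulMaps

variable {M : Type} [AddCommGroup M] [Module R M]

theorem kt_mem_kZ {n : ℕ} (x : Fin n → R) {u v : ℕ} (h : u ≤ v) (p : ℕ) :
    ∀ f ∈ kZ (fun j => x j ^ (u + 1)) M p,
      kt x (v - u) p f ∈ kZ (fun j => x j ^ (v + 1)) M p := by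
  intro f hf
  have he : u + 1 + (v - u) = v + 1 := by omega
  have hc := congrArg (fun φ => φ f) (kt_kd (M := M) x (u + 1) (v - u) p)
  simp only [LinearMap.comp_apply] at hc
  rw [he] at hc
  simp only [kZ, LinearMap.mem_ker] at hf ⊢
  rw [← hc, hf, map_zero]

theorem kt_mem_kB {n : ℕ} (x : Fin n → R) {u v : ℕ} (h : u ≤ v) (p : ℕ) :
    ∀ f ∈ kB (fun j => x j ^ (u + 1)) M p,
      kt x (v - u) p f ∈ kB (fun j => x j ^ (v + 1)) M p := by
  intro f hf
  cases p with
  | zero =>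
      simp only [kB, Submodule.mem_bot] at hf ⊢
      rw [hf, map_zero]
  | succ q =>
      simp only [kB, LinearMap.mem_range] at hf ⊢
      obtain ⟨g, hg⟩ := hf
      refine ⟨kt x (v - u) q g, ?_⟩
      have he : u + 1 + (v - u) = v + 1 := by omega
      have hc := congrArg (fun φ => φ g) (kt_kd (M := M) x (u + 1) (v - u) q)
      simp only [LinearMap.comp_apply] at hc
      rw [he] at hc
      rw [← hc, hg]

end KoszulMaps

/-- The map `H^p(x^{u+1}; M) → H^p(x^{v+1}; M)`, `u ≤ v`, induced by the transition map of
Koszul cochain complexes. -/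
def ktH {n : ℕ} (x : Fin n → R) (M : Type) [AddCommGroup M] [Module R M] (p : ℕ)
    (u v : ℕ) (h : u ≤ v) :
    Hk (fun j => x j ^ (u + 1)) M p →ₗ[R] Hk (fun j => x j ^ (v + 1)) M p :=
  Submodule.mapQ _ _ ((kt x (v - u) p).restrict (kt_mem_kZ x h p)) (by
    rintro ⟨f, hfZ⟩ hfN
    simp only [Submodule.mem_comap, Submodule.mem_inf, Submodule.coe_subtype] at hfN ⊢
    exact ⟨kt_mem_kB x h p f hfN.1, kt_mem_kZ x h p f hfN.2⟩)

/-- `H^p_{⟨x⟩}(M)`, realized as the direct limit of the Koszul cohomology modules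
`H^p(x^{u+1}; M)` along the transition maps (cf. 2.1(iv) in the paper). -/
abbrev KLoc {n : ℕ} (x : Fin n → R) (M : Type) [AddCommGroup M] [Module R M] (p : ℕ) :=
  Module.DirectLimit (fun u : ℕ => Hk (fun j => x j ^ (u + 1)) M p)
    (fun u v h => ktH x M p u v h)

/-- Transport of Koszul cohomology along an equality of defining sequences. -/
def castHk {n : ℕ} (M : Type) [AddCommGroup M] [Module R M] (p : ℕ) {y z : Fin n → R}
    (h : y = z) : Hk y M p →ₗ[R] Hk z M p :=
  Eq.rec (motive := fun w _ => Hk y M p →ₗ[R] Hk w M p) LinearMap.id h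

/-- The canonical map `λ^p_M : H^p(x; M) → H^p_{⟨x⟩}(M)`, i.e. the structure map of the
direct limit at exponent `1`. -/
def klambda {n : ℕ} (x : Fin n → R) (M : Type) [AddCommGroup M] [Module R M] (p : ℕ) :
    Hk x M p →ₗ[R] KLoc x M p :=
  (Module.DirectLimit.of R ℕ (fun u : ℕ => Hk (fun j => x j ^ (u + 1)) M p)
      (fun u v h => ktH x M p u v h) 0).comp
    (castHk M p (funext fun j => by rw [zero_add, pow_one] :
      x = fun j => x j ^ (0 + 1)))

/-- Surjectivity of the canonical map `λ^p_M : H^p(x; M) → H^p_{⟨x⟩}(M)`. -/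
def LambdaSurj {n : ℕ} (x : Fin n → R) (M : Type) [AddCommGroup M] [Module R M] (p : ℕ) :
    Prop :=
  Function.Surjective (klambda x M p)

set_option linter.unusedSectionVars false
section Sat

variable {M : Type} [AddCommGroup M] [Module R M]

/-- The `I`-saturation of a submodule. -/
def sat (I : Ideal R) (L : Submodule R M) : Submodule R M where
  carrier := {m | ∃ t : ℕ, ∀ b ∈ I ^ t, b • m ∈ L}
  zero_mem' := ⟨0, fun b _ => by simp⟩
  add_mem' := by
    rintro m m' ⟨t, ht⟩ ⟨t', ht'⟩
    refine ⟨t + t', fun b hb => ?_⟩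
    rw [smul_add]
    exact L.add_mem (ht b (Ideal.pow_le_pow_right (Nat.le_add_right t t') hb))
      (ht' b (Ideal.pow_le_pow_right (Nat.le_add_left t' t) hb))
  smul_mem' := by
    rintro c m ⟨t, ht⟩
    refine ⟨t, fun b hb => ?_⟩
    rw [smul_comm]
    exact L.smul_mem c (ht b hb)

theorem mem_sat {I : Ideal R} {L : Submodule R M} {m : M} :
    m ∈ sat I L ↔ ∃ t : ℕ, ∀ b ∈ I ^ t, b • m ∈ L := Iff.rfl

theorem le_sat (I : Ideal R) (L : Submodule R M) : L ≤ sat I L :=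
  fun m hm => ⟨0, fun b _ => L.smul_mem b hm⟩

theorem sat_mono (I : Ideal R) {L L' : Submodule R M} (h : L ≤ L') : sat I L ≤ sat I L' :=
  fun _ ⟨t, ht⟩ => ⟨t, fun b hb => h (ht b hb)⟩

/-- An element all of whose multiples by an ideal power lie in the saturation is in it. -/
theorem sat_of_pow [IsNoetherianRing R] {I : Ideal R} {L : Submodule R M} {m : M} (t : ℕ)
    (h : ∀ b ∈ I ^ t, b • m ∈ sat I L) : m ∈ sat I L := by
  classical
  obtain ⟨G, hG⟩ := (IsNoetherian.noetherian (I ^ t) : (I ^ t).FG)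
  have hb : ∀ b ∈ G, b • m ∈ sat I L := fun b hb => h b (hG ▸ Submodule.subset_span hb)
  choose! e he using fun b hb' => mem_sat.1 (hb b hb')
  refine ⟨G.sup e + t, fun b hb' => ?_⟩
  rw [pow_add] at hb'
  refine Submodule.mul_induction_on hb' ?_ ?_
  · intro p hp q hq
    rw [← hG] at hq
    induction hq using Submodule.span_induction with
    | mem q hq =>
      rw [mul_smul]
      exact he q hq p (Ideal.pow_le_pow_right (Finset.le_sup hq) hp)
    | zero => simp
    | add q q' _ _ h1 h2 => rw [mul_add, add_smul]; exact L.add_mem h1 h2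
    | smul c q _ h1 =>
      rw [smul_eq_mul, mul_left_comm, mul_smul]; exact L.smul_mem c h1
  · intro p q hp hq
    rw [add_smul]; exact L.add_mem hp hq

theorem sat_of_one [IsNoetherianRing R] {I : Ideal R} {L : Submodule R M} {m : M}
    (h : ∀ b ∈ I, b • m ∈ sat I L) : m ∈ sat I L :=
  sat_of_pow 1 (by simpa using h)

theorem sat_sat [IsNoetherianRing R] (I : Ideal R) (L : Submodule R M) :
    sat I (sat I L) = sat I L :=
  le_antisymm (fun _ ⟨t, ht⟩ => sat_of_pow t ht) (le_sat _ _)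

/-- `L + rM`. -/
def ad (L : Submodule R M) (r : R) : Submodule R M :=
  L ⊔ LinearMap.range (LinearMap.lsmul R M r)

theorem mem_ad {L : Submodule R M} {r : R} {m : M} : m ∈ ad L r ↔ ∃ w, m - r • w ∈ L := by
  constructor
  · intro h
    obtain ⟨l, hl, _, ⟨w, rfl⟩, rfl⟩ := Submodule.mem_sup.1 h
    exact ⟨w, by simpa using hl⟩
  · rintro ⟨w, hw⟩
    exact Submodule.mem_sup.2 ⟨_, hw, _, ⟨w, rfl⟩, by simp⟩

theorem le_ad (L : Submodule R M) (r : R) : L ≤ ad L r := le_sup_left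

theorem smul_mem_ad (L : Submodule R M) (r : R) (w : M) : r • w ∈ ad L r :=
  mem_ad.2 ⟨w, by simp⟩

theorem ad_mono {L L' : Submodule R M} (h : L ≤ L') (r : R) : ad L r ≤ ad L' r :=
  sup_le_sup_right h _

theorem ad_comm (L : Submodule R M) (r r' : R) : ad (ad L r) r' = ad (ad L r') r :=
  sup_right_comm _ _ _

theorem ad_sup (L N : Submodule R M) (r : R) : ad (L ⊔ N) r = ad L r ⊔ N :=
  sup_right_comm _ _ _

theorem sup_ad (L N : Submodule R M) (r : R) : L ⊔ ad N r = ad (L ⊔ N) r :=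
  (sup_assoc _ _ _).symm

/-- `z` is filter regular modulo `L`. -/
def fr (I : Ideal R) (L : Submodule R M) (z : R) : Prop := ∀ m, z • m ∈ L → m ∈ sat I L

/-- `I` kills the `I`-torsion of `M / L`. -/
def kl (I : Ideal R) (L : Submodule R M) : Prop := ∀ m ∈ sat I L, ∀ b ∈ I, b • m ∈ L

theorem fr.sat [IsNoetherianRing R] {I : Ideal R} {L : Submodule R M} {z : R} (h : fr I L z)
    {m : M} (hm : z • m ∈ sat I L) : m ∈ sat I L := by
  obtain ⟨t, ht⟩ := hm
  refine sat_of_pow t fun b hb => h _ ?_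
  rw [smul_comm]; exact ht b hb

theorem fr.sat_pow [IsNoetherianRing R] {I : Ideal R} {L : Submodule R M} {z : R} (h : fr I L z)
    (k : ℕ) {m : M} (hm : z ^ k • m ∈ _root_.sat I L) : m ∈ _root_.sat I L := by
  induction k with
  | zero => simpa using hm
  | succ k ih => exact ih (h.sat (by rwa [pow_succ', mul_smul] at hm))

theorem fr.pow [IsNoetherianRing R] {I : Ideal R} {L : Submodule R M} {z : R} (h : fr I L z)
    (k : ℕ) : fr I L (z ^ k) := fun _ hm => h.sat_pow k (le_sat _ _ hm)

/-- Powers: if `x` is filter regular on `L` and `z` on `L + xM`, then `z` is on `L + x^a M`. -/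
theorem fr_ad_pow [IsNoetherianRing R] {I : Ideal R} {L : Submodule R M} {x z : R}
    (hx : fr I L x) (hz : fr I (ad L x) z) (a : ℕ) : fr I (ad L (x ^ a)) z := by
  induction a with
  | zero =>
    intro m _
    exact le_sat _ _ (mem_ad.2 ⟨m, by simp⟩)
  | succ a ih =>
    intro m hm
    obtain ⟨w, hw⟩ := mem_ad.1 hm
    obtain ⟨t, ht⟩ := ih m (mem_ad.2 ⟨x • w, by rwa [smul_smul, ← pow_succ]⟩)
    refine sat_of_pow t fun b hb => ?_
    obtain ⟨m', hm'⟩ := mem_ad.1 (ht b hb)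
    have h1 : z • m' - x • b • w ∈ sat I L := by
      refine hx.sat_pow a (le_sat _ _ ?_)
      have := L.sub_mem (L.smul_mem b hw) (L.smul_mem z hm')
      convert this using 1
      rw [pow_succ]; module
    have h2 : m' ∈ sat I (ad L x) := by
      refine hz.sat ?_
      have := (sat I (ad L x)).add_mem (sat_mono I (le_ad L x) h1)
        (le_sat I _ (smul_mem_ad L x (b • w)))
      convert this using 1
      module
    obtain ⟨t', ht'⟩ := h2
    refine ⟨t', fun c hc => ?_⟩
    obtain ⟨w', hw'⟩ := mem_ad.1 (ht' c hc)
    refine mem_ad.2 ⟨w', ?_⟩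
    have := L.add_mem (L.smul_mem c hm') (L.smul_mem (x ^ a) hw')
    convert this using 1
    rw [pow_succ]; module

/-- Exchange: if `x` is filter regular on `L`, `z` on `L` and `L + xM`, then `x` is on `L + zM`. -/
theorem fr_swap [IsNoetherianRing R] {I : Ideal R} {L : Submodule R M} {x z : R}
    (hx : fr I L x) (hz : fr I (ad L x) z) : fr I (ad L z) x := by
  intro m hm
  obtain ⟨w, hw⟩ := mem_ad.1 hm
  have h1 : w ∈ sat I (ad L x) := by
    refine hz _ (mem_ad.2 ⟨m, ?_⟩)
    have := L.neg_mem hw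
    convert this using 1
    module
  obtain ⟨t, ht⟩ := h1
  refine sat_of_pow t fun b hb => ?_
  obtain ⟨w', hw'⟩ := mem_ad.1 (ht b hb)
  have h2 : b • m - z • w' ∈ sat I L := by
    refine hx _ ?_
    have := L.add_mem (L.smul_mem b hw) (L.smul_mem z hw')
    convert this using 1
    module
  have := (sat I (ad L z)).add_mem (sat_mono I (le_ad L z) h2)
    (le_sat I _ (smul_mem_ad L z w'))
  convert this using 1
  module

/-- Kill + filter regular: `xM ∩ sat L ⊆ L`. -/
theorem kl_inter [IsNoetherianRing R] {I : Ideal R} {L : Submodule R M} {x : R} (hxI : x ∈ I)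
    (hx : fr I L x) (hk : kl I L) {g : M} (hg : g ∈ sat I L) (hg' : g ∈ ad L x) : g ∈ L := by
  obtain ⟨w, hw⟩ := mem_ad.1 hg'
  have : w ∈ sat I L := by
    refine hx.sat ?_
    have := (sat I L).sub_mem hg (le_sat I L hw)
    convert this using 1
    module
  have := L.add_mem hw (hk w this x hxI)
  convert this using 1
  module

end Sat

section Pw

variable {ι : Type} [DecidableEq ι] (M : Type) [AddCommGroup M] [Module R M]

/-- `∑_{j ∈ S} y_j M`. -/
def pw (y : ι → R) (S : Finset ι) : Submodule R M :=
  ⨆ j ∈ S, LinearMap.range (LinearMap.lsmul R M (y j))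

theorem pw_congr {y y' : ι → R} {S : Finset ι} (h : ∀ j ∈ S, y j = y' j) :
    pw M y S = pw M y' S := by
  unfold pw
  refine iSup_congr fun j => iSup_congr fun hj => by rw [h j hj]

@[simp] theorem pw_empty (y : ι → R) : pw M y ∅ = ⊥ := by simp [pw]

theorem pw_insert (y : ι → R) (j : ι) (S : Finset ι) :
    pw M y (insert j S) = ad (pw M y S) (y j) := by
  unfold pw ad
  rw [Finset.iSup_insert, sup_comm]

theorem pw_mono (y : ι → R) {S T : Finset ι} (h : S ⊆ T) : pw M y S ≤ pw M y T :=
  iSup_le fun j => iSup_le fun hj => le_iSup₂_of_le j (h hj) le_rfl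

theorem smul_mem_pw (y : ι → R) {S : Finset ι} {j : ι} (hj : j ∈ S) (m : M) :
    y j • m ∈ pw M y S :=
  (le_iSup₂_of_le (f := fun j (_ : j ∈ S) => LinearMap.range (LinearMap.lsmul R M (y j)))
    j hj le_rfl) ⟨m, rfl⟩

theorem pw_le {y : ι → R} {S : Finset ι} {Q : Submodule R M}
    (h : ∀ j ∈ S, ∀ m : M, y j • m ∈ Q) : pw M y S ≤ Q :=
  iSup_le fun j => iSup_le fun hj => by
    rintro _ ⟨m, rfl⟩
    exact h j hj m

theorem span_smul_top_eq (T : Set R) (Q : Submodule R M) :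
    Ideal.span T • (⊤ : Submodule R M) ≤ Q ↔ ∀ r ∈ T, ∀ m : M, r • m ∈ Q := by
  constructor
  · intro h r hr m
    exact h (Submodule.smul_mem_smul (Ideal.subset_span hr) trivial)
  · intro h
    refine Submodule.smul_le.2 fun r hr m _ => ?_
    induction hr using Submodule.span_induction with
    | mem r hr => exact h r hr m
    | zero => simp
    | add a b _ _ h1 h2 => rw [add_smul]; exact Q.add_mem h1 h2
    | smul c a _ h1 => rw [smul_eq_mul, mul_smul]; exact Q.smul_mem c h1

theorem span_smul_top (y : ι → R) (S : Finset ι) (T : Set R) (h : T = y '' S) :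
    Ideal.span T • (⊤ : Submodule R M) = pw M y S := by
  subst h
  refine le_antisymm ((span_smul_top_eq M _ _).2 ?_) (pw_le M ?_)
  · rintro _ ⟨j, hj, rfl⟩ m
    exact smul_mem_pw M y hj m
  · intro j hj m
    exact Submodule.smul_mem_smul (Ideal.subset_span ⟨j, hj, rfl⟩) trivial

/-- Unconditioned filter regularity of the subfamily indexed by `A`. -/
def FR (I : Ideal R) (x : ι → R) (A : Finset ι) : Prop :=
  ∀ S ⊆ A, ∀ j ∈ A, j ∉ S → fr I (pw M x S) (x j)

/-- The property `W(n)` of the subfamily indexed by `A`. -/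
def WW (I : Ideal R) (x : ι → R) (n : ℕ) (A : Finset ι) : Prop :=
  ∀ S ⊆ A, S.card < n → ∀ α : ι → ℕ, (∀ j, 0 < α j) → kl I (pw M (fun j => x j ^ α j) S)

theorem FR.pow [IsNoetherianRing R] {I : Ideal R} {x : ι → R} {A : Finset ι} (h : FR M I x A)
    (α : ι → ℕ) {S : Finset ι} (hS : S ⊆ A) {j : ι} (hj : j ∈ A) (hjS : j ∉ S) :
    fr I (pw M (fun j => x j ^ α j) S) (x j) := by
  suffices H : ∀ k : ℕ, ∀ α : ι → ℕ, ∀ S ⊆ A, ∀ j ∈ A, j ∉ S →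
      (S.filter (fun i => α i ≠ 1)).card = k → fr I (pw M (fun j => x j ^ α j) S) (x j) from
    H _ α S hS j hj hjS rfl
  intro k
  induction k with
  | zero =>
    intro α S hS j hj hjS h0
    rw [Finset.card_eq_zero, Finset.filter_eq_empty_iff] at h0
    rw [pw_congr M (y' := x)]
    · exact h S hS j hj hjS
    · intro i hi
      have := h0 hi
      simp only [ne_eq, not_not] at this
      simp [this]
  | succ k ih =>
    intro α S hS j hj hjS h0
    obtain ⟨i, hi⟩ := Finset.card_pos.1 (h0.symm ▸ Nat.succ_pos k : 0 < (S.filter (fun i => α i ≠ 1)).card)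
    rw [Finset.mem_filter] at hi
    have e1 : S = insert i (S.erase i) := (Finset.insert_erase hi.1).symm
    have hf : (S.erase i).filter (fun i => α i ≠ 1) = (S.filter (fun i => α i ≠ 1)).erase i := by
      rw [Finset.filter_erase]
    have hc : ((S.erase i).filter (fun i => α i ≠ 1)).card = k := by
      rw [hf, Finset.card_erase_of_mem (by simpa using hi), h0]; rfl
    rw [e1, pw_insert]
    refine fr_ad_pow ?_ ?_ _
    · exact ih α _ ((Finset.erase_subset _ _).trans hS) i (hS hi.1) (Finset.notMem_erase _ _) hc
    · have := ih (Function.update α i 1) S hS j hj hjS ?_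
      · rw [e1, pw_insert] at this
        rw [pw_congr M (y' := fun j => x j ^ α j)] at this
        · simpa using this
        · intro l hl
          rw [Function.update_of_ne (Finset.ne_of_mem_erase hl)]
      · rw [← hc]
        congr 1
        ext l
        simp only [Finset.mem_filter, Finset.mem_erase, Function.update_apply]
        by_cases hl : l = i <;> simp [hl]

end Pw

section Exchange

variable {M : Type} [AddCommGroup M] [Module R M] [IsNoetherianRing R] {I : Ideal R}

theorem exch_step1 {L : Submodule R M} {ζ x : R} (hζ : ζ ∈ I) (hxI : x ∈ I) (hk : kl I L)
    (hx : fr I L x) (hfz : fr I L ζ) (hkl : ∀ β : ℕ, 0 < β → kl I (ad L (x ^ β)))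
    {m : M} (hm : m ∈ sat I (ad L ζ)) : x • m ∈ ad L ζ := by
  obtain ⟨t, ht⟩ := hm
  obtain ⟨m1, hm1⟩ := mem_ad.1 (ht (x ^ (t + 1))
    (Ideal.pow_le_pow_right (Nat.le_succ t) (Ideal.pow_mem_pow hxI _)))
  have h1 : m1 ∈ sat I (ad L (x ^ (t + 1))) := by
    refine sat_of_pow t fun b hb => ?_
    obtain ⟨w, hw⟩ := mem_ad.1 (ht b hb)
    have h2 : b • m1 - x ^ (t + 1) • w ∈ sat I L := by
      refine hfz _ ?_
      have := L.sub_mem (L.smul_mem (x ^ (t + 1)) hw) (L.smul_mem b hm1)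
      convert this using 1
      module
    have := (sat I (ad L (x ^ (t + 1)))).add_mem (sat_mono I (le_ad L _) h2)
      (le_sat I _ (smul_mem_ad L (x ^ (t + 1)) w))
    convert this using 1
    module
  have h3 := hkl (t + 1) (Nat.succ_pos t) m1 h1
  obtain ⟨n, hn⟩ := mem_ad.1 (h3 x hxI)
  have h4 : n ∈ sat I (ad L x) := by
    refine sat_of_one fun b hb => ?_
    obtain ⟨nb, hnb⟩ := mem_ad.1 (h3 b hb)
    have h5 : b • n - x • nb ∈ sat I L := by
      refine hx.pow (t + 1) _ ?_
      have := L.sub_mem (L.smul_mem x hnb) (L.smul_mem b hn)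
      convert this using 1
      module
    have := (sat I (ad L x)).add_mem (sat_mono I (le_ad L _) h5)
      (le_sat I _ (smul_mem_ad L x nb))
    convert this using 1
    module
  have h6 : ζ • n ∈ ad L x := by
    have := hkl 1 Nat.one_pos n (by simpa using h4) ζ hζ
    simpa using this
  have h7 : x • m - ζ • n ∈ sat I L := by
    refine hx.pow (t + 1) _ ?_
    have := L.add_mem (L.smul_mem x hm1) (L.smul_mem ζ hn)
    convert this using 1
    module
  exact mem_ad.2 ⟨n, kl_inter hxI hx hk h7 ((ad L x).sub_mem (smul_mem_ad L x m) h6)⟩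

theorem exch_step2 {P : Submodule R M} {xl xk : R} {a : ℕ} (ha : 0 < a) (hxl : xl ∈ I)
    (hk : kl I P) (hfl : fr I P xl) (hfk : fr I P xk) (hflk : fr I (ad P xk) xl)
    (h1 : ∀ m ∈ sat I (ad P (xl ^ a)), xk • m ∈ ad P (xl ^ a))
    (h2 : ∀ m ∈ sat I (ad P xk), xl • m ∈ ad P xk)
    {m : M} (hm : m ∈ sat I (ad P (xl ^ a))) : xl • m ∈ ad P (xl ^ a) := by
  obtain ⟨w, hw⟩ := mem_ad.1 (h1 m hm)
  have h3 : w ∈ sat I (ad P xk) := by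
    refine hflk.pow a _ (mem_ad.2 ⟨m, ?_⟩)
    have := P.neg_mem hw
    convert this using 1
    module
  obtain ⟨v, hv⟩ := mem_ad.1 (h2 w h3)
  obtain ⟨a, rfl⟩ : ∃ a', a = a' + 1 := ⟨a - 1, by omega⟩
  have h4 : xl • m - xl ^ (a + 1) • v ∈ sat I P := by
    refine hfk _ ?_
    have := P.add_mem (P.smul_mem xl hw) (P.smul_mem (xl ^ (a + 1)) hv)
    convert this using 1
    module
  refine mem_ad.2 ⟨v, kl_inter hxl hfl hk h4 (mem_ad.2 ⟨m - xl ^ a • v, ?_⟩)⟩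
  convert P.zero_mem using 1
  rw [pow_succ]; module

theorem kl_of_span {ι : Type} {x : ι → R} {A : Finset ι} (hI : Ideal.span (x '' A) = I)
    {L : Submodule R M} (h : ∀ l ∈ A, ∀ m ∈ sat I L, x l • m ∈ L) : kl I L := by
  intro m hm b hb
  rw [← hI] at hb
  induction hb using Submodule.span_induction with
  | mem r hr => obtain ⟨l, hl, rfl⟩ := hr; exact h l hl m hm
  | zero => simp
  | add a b _ _ h1 h2 => rw [add_smul]; exact L.add_mem h1 h2
  | smul c a _ h1 => rw [smul_eq_mul, mul_smul]; exact L.smul_mem c h1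

theorem WW.insert {ι : Type} [DecidableEq ι] {x : ι → R} {A : Finset ι} {z : ι} {n : ℕ}
    (hzA : z ∉ A) (hI : Ideal.span (x '' A) = I) (hzI : x z ∈ I) (hn : n ≤ A.card)
    (hF : FR M I x (insert z A)) (hW : WW M I x n A) : WW M I x n (insert z A) := by
  have hxI : ∀ l ∈ A, x l ∈ I := fun l hl => hI ▸ Ideal.subset_span ⟨l, hl, rfl⟩
  have hAz : A ⊆ Insert.insert z A := Finset.subset_insert _ _
  -- first part
  have key1 : ∀ S ⊆ A, S.card + 1 < n → ∀ α : ι → ℕ, (∀ j, 0 < α j) → ∀ l ∈ A, l ∉ S →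
      ∀ m ∈ sat I (ad (pw M (fun j => x j ^ α j) S) (x z ^ α z)),
        x l • m ∈ ad (pw M (fun j => x j ^ α j) S) (x z ^ α z) := by
    intro S hS hSn α hα l hl hlS m hm
    refine exch_step1 (I := I) (Ideal.pow_mem_of_mem I hzI _ (hα z)) (hxI l hl)
      (hW S hS (by omega) α hα) (hF.pow M α (hS.trans hAz) (hAz hl) hlS)
      ((hF.pow M α (hS.trans hAz) (Finset.mem_insert_self _ _) (fun h => hzA (hS h))).pow _) ?_ hm
    intro β hβ
    have := hW (Insert.insert l S) (Finset.insert_subset hl hS)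
      (by rw [Finset.card_insert_of_notMem hlS]; omega)
      (Function.update α l β) (fun j => by
        by_cases hj : j = l <;> simp [Function.update_apply, hj, hβ, hα])
    rw [pw_insert, pw_congr M (y' := fun j => x j ^ α j)] at this
    · simpa using this
    · intro i hi
      rw [Function.update_of_ne (show i ≠ l from fun h => hlS (h ▸ hi))]
  have key2 : ∀ k : ℕ, ∀ S ⊆ A, S.card = k → S.card + 1 < n → ∀ α : ι → ℕ, (∀ j, 0 < α j) →
      kl I (ad (pw M (fun j => x j ^ α j) S) (x z ^ α z)) := by
    intro k
    induction k with
    | zero =>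
      intro S hS hSk hSn α hα
      refine kl_of_span hI fun l hl => key1 S hS hSn α hα l hl ?_
      rw [Finset.card_eq_zero] at hSk
      simp [hSk]
    | succ k ih =>
      intro S hS hSk hSn α hα
      refine kl_of_span hI fun l hl => ?_
      by_cases hlS : l ∉ S
      · exact key1 S hS hSn α hα l hl hlS
      rw [not_not] at hlS
      obtain ⟨k', hk'A, hk'S⟩ : ∃ k' ∈ A, k' ∉ S := by
        by_contra hcon
        push Not at hcon
        have := Finset.card_le_card (show A ⊆ S from hcon)
        omega
      set S1 := S.erase l with hS1
      have e1 : S = Insert.insert l S1 := (Finset.insert_erase hlS).symm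
      have hS1A : S1 ⊆ A := (Finset.erase_subset _ _).trans hS
      have hl1 : l ∉ S1 := Finset.notMem_erase _ _
      have hk1 : k' ∉ S1 := fun h => hk'S (Finset.erase_subset _ _ h)
      have hkl : k' ≠ l := fun h => hk'S (h ▸ hlS)
      have hc1 : S1.card = k := by rw [hS1, Finset.card_erase_of_mem hlS, hSk]; rfl
      have hz1 : z ∉ S1 := fun h => hzA (hS1A h)
      have hzl : l ≠ z := fun h => hzA (h ▸ hl)
      have hzk : k' ≠ z := fun h => hzA (h ▸ hk'A)
      set y := fun j => x j ^ α j with hy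
      have eP : ad (pw M y S1) (y z) = pw M y (Insert.insert z S1) := (pw_insert M _ _ _).symm
      have hP : Insert.insert z S1 ⊆ Insert.insert z A := Finset.insert_subset_insert _ hS1A
      have hre : ad (pw M y S) (x z ^ α z) = ad (ad (pw M y S1) (y z)) (x l ^ α l) := by
        rw [e1, pw_insert, ad_comm]
      have h1 := key1 S hS hSn α hα k' hk'A hk'S
      rw [hre] at h1 ⊢
      -- exponents with 1 at k'
      set α' := Function.update α k' 1 with hα'
      have hα'p : ∀ j, 0 < α' j := fun j => by
        by_cases hj : j = k' <;> simp [hα', Function.update_apply, hj, hα]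
      have hyy : ∀ T : Finset ι, k' ∉ T → pw M (fun j => x j ^ α' j) T = pw M y T := by
        intro T hT
        refine pw_congr M fun j hj => ?_
        rw [hα', Function.update_of_ne (show j ≠ k' from fun h => hT (h ▸ hj))]
      have h2 := key1 (Insert.insert k' S1) (Finset.insert_subset hk'A hS1A)
        (by rw [Finset.card_insert_of_notMem hk1]; omega) α' hα'p l hl
        (by simp [hkl.symm, hl1])
      have hre2 : ad (pw M (fun j => x j ^ α' j) (Insert.insert k' S1)) (x z ^ α' z)
          = ad (ad (pw M y S1) (y z)) (x k') := by
        rw [pw_insert, ad_comm, hyy _ hk1]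
        simp [hα', hy, Function.update_of_ne hzk.symm]
      rw [hre2] at h2
      have hkz : k' ∉ Insert.insert z S1 := by simp [hzk, hk1]
      have hlz : l ∉ Insert.insert z S1 := by simp [hzl, hl1]
      refine fun m hm => exch_step2 (hα l) (hxI l hl) (ih S1 hS1A hc1 (by omega) α hα) ?_ ?_ ?_ h1 h2 hm
      · rw [eP]; exact hF.pow M α hP (hAz hl) hlz
      · rw [eP]; exact hF.pow M α hP (hAz hk'A) hkz
      · have := hF.pow M α' (S := Insert.insert k' (Insert.insert z S1))
          (Finset.insert_subset (hAz hk'A) hP) (hAz hl) (by simp [hkl.symm, hzl, hl1])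
        rw [pw_insert, hyy _ hkz, ← eP] at this
        simpa [hα'] using this
  intro S hS hSn α hα
  by_cases hz : z ∈ S
  · have e1 : S = Insert.insert z (S.erase z) := (Finset.insert_erase hz).symm
    have hc : (S.erase z).card + 1 = S.card := Finset.card_erase_add_one hz
    rw [e1, pw_insert]
    refine key2 _ _ (fun j hj => ?_) rfl (by omega) α hα
    exact (Finset.mem_insert.1 (hS (Finset.erase_subset _ _ hj))).resolve_left
      (Finset.ne_of_mem_erase hj)
  · exact hW S (fun j hj => (Finset.mem_insert.1 (hS hj)).resolve_left (fun h => hz (h ▸ hj)))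
      hSn α hα

/-- Adding several elements. -/
theorem WW.union {ι : Type} [DecidableEq ι] {x : ι → R} {A : Finset ι} {n : ℕ}
    (hI : Ideal.span (x '' A) = I) (hxI : ∀ j, x j ∈ I) (hn : n ≤ A.card) (hW : WW M I x n A)
    (B : Finset ι) (hF : FR M I x (B ∪ A)) : WW M I x n (B ∪ A) := by
  induction B using Finset.induction_on with
  | empty => simpa using hW
  | insert z B hz ih =>
    have hF' : FR M I x (B ∪ A) := fun S hS j hj =>
      hF S (hS.trans (Finset.union_subset_union_left (Finset.subset_insert _ _))) j
        (Finset.union_subset_union_left (Finset.subset_insert _ _) hj)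
    by_cases hzA : z ∈ B ∪ A
    · have : Insert.insert z B ∪ A = B ∪ A := by
        rw [Finset.insert_union, Finset.insert_eq_of_mem hzA]
      rw [this]; exact ih hF'
    · rw [Finset.insert_union] at hF ⊢
      refine WW.insert hzA ?_ (hxI z) (hn.trans (Finset.card_le_card Finset.subset_union_right))
        hF (ih hF')
      refine le_antisymm (Ideal.span_le.2 ?_) ?_
      · rintro _ ⟨j, _, rfl⟩; exact hxI j
      · rw [← hI]
        exact Ideal.span_mono (Set.image_mono (by simp))

theorem WW.mono {ι : Type} [DecidableEq ι] {x : ι → R} {A B : Finset ι} {n : ℕ}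
    (hW : WW M I x n B) (h : A ⊆ B) : WW M I x n A :=
  fun S hS => hW S (hS.trans h)

end Exchange

section Generic

theorem coset_avoid (c : R) (J : Ideal R) (Ps : Finset (Ideal R)) (hp : ∀ P ∈ Ps, P.IsPrime)
    (h : ∀ P ∈ Ps, ¬ (Ideal.span {c} ⊔ J ≤ P)) : ∃ j ∈ J, ∀ P ∈ Ps, c + j ∉ P := by
  classical
  set A := Ps.filter (fun P => c ∈ P) with hA
  set B := Ps.filter (fun Q => c ∉ Q ∧ ∀ P ∈ A, ¬ Q ≤ P) with hB
  have hK : ¬ (((J ⊓ B.inf id : Ideal R) : Set R) ⊆ ⋃ i ∈ (↑A : Set (Ideal R)), (id i : Ideal R)) := by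
    intro hsub
    obtain ⟨P, hP, hle⟩ := (Ideal.subset_union_prime (f := id) (s := A) ⊥ ⊥
      (fun P hP _ _ => hp P (Finset.mem_filter.1 hP).1)).1 hsub
    have hP' := Finset.mem_filter.1 hP
    have := hp P hP'.1
    rcases (Ideal.IsPrime.inf_le this).1 hle with h1 | h1
    · exact h P hP'.1 (sup_le ((Ideal.span_singleton_le_iff_mem _).2 hP'.2) h1)
    · obtain ⟨Q, hQ, hQP⟩ := (Ideal.IsPrime.inf_le' this).1 h1
      exact (Finset.mem_filter.1 hQ).2.2 P hP hQP
  obtain ⟨j, hj, hj'⟩ := Set.not_subset.1 hK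
  simp only [id, Set.mem_iUnion, not_exists] at hj'
  have hj1 : j ∈ J := hj.1
  have hj2 : ∀ Q ∈ B, j ∈ Q := fun Q hQ => (Finset.inf_le (f := id) hQ : B.inf id ≤ Q) hj.2
  have hAv : ∀ P ∈ A, c + j ∉ P := fun P hP hc =>
    hj' P hP ((Ideal.add_mem_iff_right P (Finset.mem_filter.1 hP).2).1 hc)
  refine ⟨j, hj1, fun P hP hc => ?_⟩
  by_cases hcP : c ∈ P
  · exact hAv P (Finset.mem_filter.2 ⟨hP, hcP⟩) hc
  · by_cases hex : ∃ P' ∈ A, P ≤ P'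
    · obtain ⟨P', hP', hle⟩ := hex
      exact hAv P' hP' (hle hc)
    · push Not at hex
      exact hcP ((Ideal.add_mem_iff_left P
        (hj2 P (Finset.mem_filter.2 ⟨hP, hcP, hex⟩))).1 hc)

variable {M : Type} [AddCommGroup M] [Module R M] [IsNoetherianRing R] {I : Ideal R}

theorem fr_of_avoid {L : Submodule R M} {z : R}
    (h : ∀ P ∈ associatedPrimes R (M ⧸ L), ¬ I ≤ P → z ∉ P) : fr I L z := by
  intro m hm
  set N := Submodule.span R {(L.mkQ m : M ⧸ L)} with hN
  have hz : z ∈ Module.annihilator R N := by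
    rw [hN, ← Submodule.annihilator, Submodule.mem_annihilator_span_singleton]
    rw [← map_smul, Submodule.mkQ_apply, Submodule.Quotient.mk_eq_zero]
    exact hm
  have hle : I ≤ (Module.annihilator R N).radical := by
    rw [← Ideal.sInf_minimalPrimes]
    refine le_sInf fun P hP => ?_
    have h1 : P ∈ associatedPrimes R (M ⧸ L) :=
      associatedPrimes.subset_of_injective N.injective_subtype
        (Module.associatedPrimes.minimalPrimes_annihilator_subset_associatedPrimes R N hP)
    by_contra hcon
    exact h P h1 hcon (hP.1.2 hz)
  obtain ⟨t, ht⟩ := Ideal.exists_pow_le_of_le_radical_of_fg hle (IsNoetherian.noetherian I)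
  refine ⟨t, fun b hb => ?_⟩
  have := ht hb
  rw [hN, ← Submodule.annihilator, Submodule.mem_annihilator_span_singleton, ← map_smul,
    Submodule.mkQ_apply, Submodule.Quotient.mk_eq_zero] at this
  exact this

theorem generic_elt [Module.Finite R M] (c : R) (J : Ideal R) (hcJ : Ideal.span {c} ⊔ J = I)
    (LL : Set (Submodule R M)) (hLL : LL.Finite) : ∃ j ∈ J, ∀ L ∈ LL, fr I L (c + j) := by
  classical
  have hfin : (⋃ L ∈ LL, associatedPrimes R (M ⧸ L)).Finite :=
    hLL.biUnion fun L _ => associatedPrimes.finite R (M ⧸ L)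
  obtain ⟨j, hj, hj'⟩ := coset_avoid c J (hfin.toFinset.filter (fun P => ¬ I ≤ P)) (by
      intro P hP
      simp only [Finset.mem_filter, Set.Finite.mem_toFinset, Set.mem_iUnion] at hP
      obtain ⟨⟨L, _, hP⟩, _⟩ := hP
      exact hP.1) (by
      intro P hP
      rw [hcJ]
      exact (Finset.mem_filter.1 hP).2)
  refine ⟨j, hj, fun L hL => fr_of_avoid fun P hP hIP => hj' P ?_⟩
  simp only [Finset.mem_filter, Set.Finite.mem_toFinset, Set.mem_iUnion]
  exact ⟨⟨L, hL, hP⟩, hIP⟩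

theorem FR.insert {ι : Type} [DecidableEq ι] {x : ι → R} {A : Finset ι} {z : ι}
    (hF : FR M I x A) (hz : ∀ S ⊆ A, fr I (pw M x S) (x z)) :
    FR M I x (insert z A) := by
  intro S hS j hj hjS
  by_cases hjz : j = z
  · subst hjz
    exact hz S fun i hi => (Finset.mem_insert.1 (hS hi)).resolve_left fun h => hjS (h ▸ hi)
  have hjA : j ∈ A := (Finset.mem_insert.1 hj).resolve_left hjz
  by_cases hzS : z ∈ S
  · have hS0 : S.erase z ⊆ A := fun i hi =>
      (Finset.mem_insert.1 (hS (Finset.erase_subset _ _ hi))).resolve_left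
        (Finset.ne_of_mem_erase hi)
    have hj0 : j ∉ S.erase z := fun h => hjS (Finset.erase_subset _ _ h)
    rw [← Finset.insert_erase hzS, pw_insert]
    refine fr_swap (hF _ hS0 j hjA hj0) ?_
    rw [← pw_insert]
    exact hz _ (Finset.insert_subset hjA hS0)
  · exact hF S (fun i hi => (Finset.mem_insert.1 (hS hi)).resolve_left fun h => hzS (h ▸ hi))
      j hjA hjS

theorem pw_map {ι κ : Type} [DecidableEq ι] [DecidableEq κ] (f : ι ↪ κ) (y : κ → R)
    (S : Finset ι) : pw M y (S.map f) = pw M (fun i => y (f i)) S := by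
  induction S using Finset.induction_on with
  | empty => simp
  | insert a S ha ih => rw [Finset.map_insert, pw_insert, pw_insert, ih]

theorem FR_map {ι κ : Type} [DecidableEq ι] [DecidableEq κ] (f : ι ↪ κ) (x : κ → R)
    (A : Finset ι) (h : FR M I (fun i => x (f i)) A) : FR M I x (A.map f) := by
  intro S hS j hj hjS
  obtain ⟨S', hS', rfl⟩ := Finset.subset_map_iff.1 hS
  obtain ⟨j', hj', rfl⟩ := Finset.mem_map.1 hj
  rw [pw_map]
  exact h S' hS' j' hj' fun h => hjS (Finset.mem_map_of_mem f h)

theorem WW_map {ι κ : Type} [DecidableEq ι] [DecidableEq κ] (f : ι ↪ κ) (x : κ → R)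
    (A : Finset ι) (n : ℕ) : WW M I (fun i => x (f i)) n A ↔ WW M I x n (A.map f) := by
  constructor
  · intro h S hS hc α hα
    obtain ⟨S', hS', rfl⟩ := Finset.subset_map_iff.1 hS
    rw [pw_map]
    exact h S' hS' (by simpa using hc) (fun i => α (f i)) (fun i => hα _)
  · intro h S hS hc α hα
    have := h (S.map f) (Finset.map_subset_map.2 hS) (by simpa using hc)
      (Function.extend f α 1) (fun j => by
        by_cases hj : ∃ i, f i = j
        · obtain ⟨i, rfl⟩ := hj
          rw [f.injective.extend_apply]; exact hα i
        · rw [Function.extend_apply' _ _ _ hj]; exact Nat.one_pos)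
    rw [pw_map] at this
    simpa [f.injective.extend_apply] using this

theorem generic_seq [Module.Finite R M] {ι : Type} [DecidableEq ι] [Fintype ι] (X : ι → R)
    {r : ℕ} (c : Fin r → R) (hc : Ideal.span (Set.range c) = I) :
    ∃ z : Fin r → R, Ideal.span (Set.range z) = I ∧
      ∀ A : Finset ι, FR M I X A →
        FR M I (Sum.elim X z) (A.map Function.Embedding.inl ∪ Finset.univ.map Function.Embedding.inr) := by
  have key : ∀ k : ℕ, k ≤ r → ∃ z : Fin r → R, Ideal.span (Set.range z) = I ∧
      ∀ i : Fin r, i.1 < k → ∀ S : Finset (ι ⊕ Fin r), (∀ i', Sum.inr i' ∈ S → i' < i) →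
        fr I (pw M (Sum.elim X z) S) (z i) := by
    intro k
    induction k with
    | zero => exact fun _ => ⟨c, hc, fun i hi => absurd hi (Nat.not_lt_zero _)⟩
    | succ k ih =>
      intro hk
      obtain ⟨z, hz, hfr⟩ := ih (by omega)
      set κ : Fin r := ⟨k, by omega⟩ with hκ
      set J := Ideal.span (z '' {i | i ≠ κ}) with hJ
      have hun : Ideal.span {z κ} ⊔ J = I := by
        rw [← hz, hJ, ← Ideal.span_union]
        congr 1
        ext a
        constructor
        · rintro (rfl | ⟨i, _, rfl⟩) <;> exact ⟨_, rfl⟩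
        · rintro ⟨i, rfl⟩
          by_cases h : i = κ
          · left; simp [h]
          · right; exact ⟨i, h, rfl⟩
      obtain ⟨j, hj, hj'⟩ := generic_elt (M := M) (z κ) J hun
        (Set.range fun S : Finset (ι ⊕ Fin r) => pw M (Sum.elim X z) S) (Set.finite_range _)
      have hcg : ∀ S : Finset (ι ⊕ Fin r), Sum.inr κ ∉ S →
          pw M (Sum.elim X (Function.update z κ (z κ + j))) S = pw M (Sum.elim X z) S := by
        intro S hS
        refine pw_congr M ?_
        rintro (i | i) hi
        · rfl
        · simp only [Sum.elim_inr]
          rw [Function.update_of_ne (show i ≠ κ from fun h => hS (h ▸ hi))]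
      refine ⟨Function.update z κ (z κ + j), ?_, ?_⟩
      · have hJ' : J ≤ Ideal.span (Set.range (Function.update z κ (z κ + j))) := by
          refine Ideal.span_le.2 ?_
          rintro _ ⟨i, hi, rfl⟩
          exact Ideal.subset_span ⟨i, Function.update_of_ne hi _ _⟩
        refine le_antisymm (Ideal.span_le.2 ?_) ?_
        · rintro _ ⟨i, rfl⟩
          by_cases h : i = κ
          · rw [h, Function.update_self, ← hun]
            exact Submodule.add_mem_sup (Ideal.mem_span_singleton_self _) hj
          · rw [Function.update_of_ne h, ← hz]
            exact Ideal.subset_span ⟨i, rfl⟩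
        · rw [← hun]
          refine sup_le ((Ideal.span_singleton_le_iff_mem _).2 ?_) hJ'
          have h1 : z κ + j ∈ Ideal.span (Set.range (Function.update z κ (z κ + j))) :=
            Ideal.subset_span ⟨κ, Function.update_self _ _ _⟩
          exact (Ideal.add_mem_iff_left _ (hJ' hj)).1 h1
      · intro i hi S hS
        have hκS : Sum.inr κ ∉ S := fun h => by
          have := hS κ h
          rw [Fin.lt_def] at this
          simp only [hκ] at this
          omega
        rw [hcg S hκS]
        by_cases h : i = κ
        · rw [h, Function.update_self]
          exact hj' _ ⟨S, rfl⟩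
        · rw [Function.update_of_ne h]
          refine hfr i ?_ S hS
          have : i.1 ≠ k := fun h' => h (Fin.ext h')
          omega
  obtain ⟨z, hz, hfr⟩ := key r le_rfl
  refine ⟨z, hz, fun A hA => ?_⟩
  have main : ∀ k : ℕ, k ≤ r → FR M I (Sum.elim X z) (A.map Function.Embedding.inl ∪
      (Finset.univ.filter (fun i : Fin r => i.1 < k)).map Function.Embedding.inr) := by
    intro k
    induction k with
    | zero =>
      intro _
      have := FR_map (M := M) (I := I) (Function.Embedding.inl : ι ↪ ι ⊕ Fin r)
        (Sum.elim X z) A (by simpa using hA)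
      simpa using this
    | succ k ih =>
      intro hk
      have hkr : k < r := hk
      have h1 := (ih hkr.le).insert (z := Sum.inr ⟨k, hkr⟩) (by
        intro S hS
        refine hfr ⟨k, hkr⟩ hk S fun i' hi' => ?_
        have := hS hi'
        rw [Fin.lt_def]
        simpa using this)
      convert h1 using 1
      ext (i | i)
      · simp
      · simp only [Finset.mem_union, Finset.mem_map, Finset.mem_filter, Finset.mem_univ, true_and,
          Finset.mem_insert, Function.Embedding.inr_apply, Function.Embedding.inl_apply,
          Sum.inr.injEq, Fin.ext_iff, reduceCtorEq, and_false, exists_false, false_or]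
        constructor
        · rintro ⟨a, ha, hai⟩
          rcases Nat.lt_succ_iff_lt_or_eq.1 ha with h | h
          · exact Or.inr ⟨a, h, hai⟩
          · exact Or.inl (hai ▸ h)
        · rintro (h | ⟨a, ha, hai⟩)
          · exact ⟨i, by omega, rfl⟩
          · exact ⟨a, by omega, hai⟩
  have := main r le_rfl
  convert this using 2
  ext i
  simp

/-- The property `W(n)` does not depend on the f-generating set. -/
theorem WW_indep [Module.Finite R M] {s s' n : ℕ} (x : Fin s → R) (y : Fin s' → R)
    (hx : Ideal.span (Set.range x) = I) (hy : Ideal.span (Set.range y) = I)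
    (hFx : FR M I x Finset.univ) (hFy : FR M I y Finset.univ) (hn : n ≤ s)
    (hW : WW M I x n Finset.univ) : WW M I y n Finset.univ := by
  obtain ⟨z, hz, hFz⟩ := generic_seq (M := M) (Sum.elim x y) x hx
  set X : (Fin s ⊕ Fin s') ⊕ Fin s → R := Sum.elim (Sum.elim x y) z with hX
  set f1 : Fin s ↪ (Fin s ⊕ Fin s') := Function.Embedding.inl
  set f2 : Fin s' ↪ (Fin s ⊕ Fin s') := Function.Embedding.inr
  set g : (Fin s ⊕ Fin s') ↪ (Fin s ⊕ Fin s') ⊕ Fin s := Function.Embedding.inl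
  set h : Fin s ↪ (Fin s ⊕ Fin s') ⊕ Fin s := Function.Embedding.inr
  have F1 := hFz (Finset.univ.map f1) (FR_map f1 _ _ hFx)
  have F2 := hFz (Finset.univ.map f2) (FR_map f2 _ _ hFy)
  have hXI : ∀ j, X j ∈ I := by
    rintro ((j | j) | j)
    · exact hx ▸ Ideal.subset_span ⟨j, rfl⟩
    · exact hy ▸ Ideal.subset_span ⟨j, rfl⟩
    · exact hz ▸ Ideal.subset_span ⟨j, rfl⟩
  have W1 : WW M I X n ((Finset.univ.map f1).map g) := by
    rw [← WW_map, ← WW_map]; exact hW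
  have W2 := WW.union (x := X) (A := (Finset.univ.map f1).map g) (n := n) (I := I) (M := M)
    (by rw [← hx]; congr 1; ext a; simp [X, f1, g]) hXI (by simpa using hn) W1
    (Finset.univ.map h) (by rw [Finset.union_comm]; exact F1)
  have W3 : WW M I X n (Finset.univ.map h) := W2.mono Finset.subset_union_left
  have W4 := WW.union (x := X) (A := Finset.univ.map h) (n := n) (I := I) (M := M)
    (by rw [← hz]; congr 1; ext a; simp [X, h]) hXI (by simpa using hn) W3
    ((Finset.univ.map f2).map g) F2
  have W5 : WW M I X n ((Finset.univ.map f2).map g) := W4.mono Finset.subset_union_left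
  rw [← WW_map, ← WW_map] at W5
  exact W5

/-- Existence of f-generating sets. -/
theorem exists_fgen [Module.Finite R M] (I : Ideal R) (n : ℕ) : ∃ (s : ℕ) (x : Fin s → R),
    Ideal.span (Set.range x) = I ∧ FR M I x Finset.univ ∧ n ≤ s := by
  obtain ⟨r, c, hc⟩ := Submodule.fg_iff_exists_fin_generating_family.1
    (IsNoetherian.noetherian I : I.FG)
  have hc' : Ideal.span (Set.range (Fin.append c (fun _ : Fin n => (0 : R)))) = I := by
    refine le_antisymm (Ideal.span_le.2 ?_) ?_
    · rintro _ ⟨i, rfl⟩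
      refine Fin.addCases (fun i => ?_) (fun i => ?_) i
      · rw [Fin.append_left, ← hc]; exact Submodule.subset_span ⟨i, rfl⟩
      · rw [Fin.append_right]; exact I.zero_mem
    · rw [← hc]
      refine Submodule.span_mono ?_
      rintro _ ⟨i, rfl⟩
      exact ⟨Fin.castAdd n i, by simp⟩
  obtain ⟨z, hz, hF⟩ := generic_seq (M := M) (fun i : Empty => i.elim) _ hc'
  refine ⟨r + n, z, hz, ?_, by omega⟩
  have h1 := hF ∅ (fun S _ j hj => by simp at hj)
  intro S hS j hj hjS
  have := h1 (S.map Function.Embedding.inr) (by simp) (Sum.inr j) (by simp) (by simpa using hjS)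
  rw [pw_map] at this
  exact this

end Generic

section TotalKoszul

variable {M : Type} [AddCommGroup M] [Module R M] {s : ℕ}

/-- the Koszul sign -/
def sg (R : Type) [CommRing R] {s : ℕ} (j : Fin s) (t : Finset (Fin s)) : R :=
  (-1 : R) ^ (t.filter (fun a => a < j)).card

theorem sg_mul_self (j : Fin s) (t : Finset (Fin s)) : sg R j t * sg R j t = 1 := by
  unfold sg
  rw [← mul_pow]; simp

theorem sg_erase_lt {i j : Fin s} {t : Finset (Fin s)} (hi : i ∈ t) (h : i < j) :
    sg R j t = - sg R j (t.erase i) := by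
  unfold sg
  have : (t.erase i).filter (fun a => a < j) = (t.filter (fun a => a < j)).erase i :=
    Finset.filter_erase _ _ _
  rw [this]
  have hm : i ∈ t.filter (fun a => a < j) := Finset.mem_filter.2 ⟨hi, h⟩
  rw [← Finset.card_erase_add_one hm, pow_succ]
  ring

theorem sg_erase_ge {i j : Fin s} {t : Finset (Fin s)} (h : ¬ i < j) :
    sg R j (t.erase i) = sg R j t := by
  unfold sg
  congr 2
  ext a
  simp only [Finset.mem_filter, Finset.mem_erase]
  constructor
  · rintro ⟨⟨_, h2⟩, h3⟩; exact ⟨h2, h3⟩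
  · rintro ⟨h2, h3⟩; exact ⟨⟨fun h' => h (h' ▸ h3), h2⟩, h3⟩

theorem sg_comm {i j : Fin s} {t : Finset (Fin s)} (hi : i ∈ t) (hj : j ∈ t) (h : i ≠ j) :
    sg R j t * sg R i (t.erase j) = - (sg R i t * sg R j (t.erase i)) := by
  rcases lt_or_gt_of_ne h with h | h
  · rw [sg_erase_lt hi h, sg_erase_ge (i := j) (j := i) h.not_gt]; ring
  · rw [sg_erase_lt hj h, sg_erase_ge (i := i) (j := j) h.not_gt]; ring

/-- total Koszul differential -/
def dk (y : Fin s → R) : (Finset (Fin s) → M) →ₗ[R] (Finset (Fin s) → M) where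
  toFun F t := ∑ j ∈ t, (sg R j t * y j) • F (t.erase j)
  map_add' F G := by
    funext t
    simp [smul_add, Finset.sum_add_distrib]
  map_smul' r F := by
    funext t
    simp [Finset.smul_sum, smul_comm r]

theorem dk_apply (y : Fin s → R) (F : Finset (Fin s) → M) (t : Finset (Fin s)) :
    dk y F t = ∑ j ∈ t, (sg R j t * y j) • F (t.erase j) := rfl

/-- total transition map -/
def tk (x : Fin s → R) (e : ℕ) : (Finset (Fin s) → M) →ₗ[R] (Finset (Fin s) → M) where
  toFun F t := (∏ j ∈ t, x j) ^ e • F t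
  map_add' F G := by funext t; simp [smul_add]
  map_smul' r F := by funext t; simp [smul_comm r]

theorem tk_apply (x : Fin s → R) (e : ℕ) (F : Finset (Fin s) → M) (t : Finset (Fin s)) :
    tk x e F t = (∏ j ∈ t, x j) ^ e • F t := rfl

theorem tk_tk (x : Fin s → R) (e e' : ℕ) (F : Finset (Fin s) → M) :
    tk x e (tk x e' F) = tk x (e + e') F := by
  funext t; simp only [tk_apply, smul_smul, pow_add]

/-- contraction -/
def ct (R : Type) [CommRing R] {M : Type} [AddCommGroup M] [Module R M] {s : ℕ} (j : Fin s)
    (F : Finset (Fin s) → M) : Finset (Fin s) → M :=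
  fun t => if j ∈ t then 0 else sg R j t • F (insert j t)

theorem dk_dk (y : Fin s → R) (F : Finset (Fin s) → M) : dk y (dk y F) = 0 := by
  funext t
  simp only [dk_apply, Finset.smul_sum, Pi.zero_apply]
  rw [Finset.sum_sigma']
  refine Finset.sum_involution (fun p _ => ⟨p.2, p.1⟩) ?_ ?_ ?_ ?_
  · rintro ⟨j, i⟩ hp
    simp only [Finset.mem_sigma, Finset.mem_erase] at hp
    obtain ⟨hj, hij, hi⟩ := hp
    simp only [smul_smul]
    rw [Finset.erase_right_comm, ← add_smul]
    have := sg_comm (R := R) hi hj hij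
    have h0 : sg R j t * y j * (sg R i (t.erase j) * y i) +
        sg R i t * y i * (sg R j (t.erase i) * y j) = 0 := by
      linear_combination (y i * y j) * this
    rw [h0, zero_smul]
  · rintro ⟨j, i⟩ hp _ heq
    simp only [Finset.mem_sigma, Finset.mem_erase] at hp
    simp only [Sigma.mk.injEq] at heq
    exact hp.2.1 heq.1
  · rintro ⟨j, i⟩ hp
    simp only [Finset.mem_sigma, Finset.mem_erase] at hp ⊢
    exact ⟨hp.2.2, fun h => hp.2.1 h.symm, hp.1⟩
  · rintro ⟨j, i⟩ hp; rfl

theorem dk_ct (y : Fin s → R) (j : Fin s) (F : Finset (Fin s) → M) (t : Finset (Fin s)) :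
    dk y (ct R j F) t + ct R j (dk y F) t = y j • F t := by
  by_cases hj : j ∈ t
  · have h2 : ct R j (dk y F) t = 0 := by simp [ct, hj]
    rw [h2, add_zero, dk_apply, Finset.sum_eq_single j]
    · simp only [ct, Finset.mem_erase, ne_eq, not_true_eq_false, false_and, if_false]
      rw [Finset.insert_erase hj, sg_erase_ge (lt_irrefl j), smul_smul]
      congr 1
      linear_combination (y j) * sg_mul_self (R := R) j t
    · intro i hi hij
      simp [ct, hj, Ne.symm hij]
    · exact fun h => absurd hj h
  · have h2 : ct R j (dk y F) t = sg R j t • dk y F (insert j t) := by simp [ct, hj]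
    rw [h2, dk_apply, dk_apply, Finset.sum_insert hj, Finset.erase_insert hj, smul_add, add_left_comm,
      Finset.smul_sum, ← Finset.sum_add_distrib, Finset.sum_eq_zero, add_zero, smul_smul]
    · congr 1
      have : sg R j (insert j t) = sg R j t := by
        rw [← sg_erase_ge (lt_irrefl j), Finset.erase_insert hj]
      rw [this]
      linear_combination (y j) * sg_mul_self (R := R) j t
    · intro i hi
      have hij : i ≠ j := fun h => hj (h ▸ hi)
      have h1 : j ∉ t.erase i := fun h => hj (Finset.mem_of_mem_erase h)
      have e1 : (insert j t).erase i = insert j (t.erase i) :=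
        Finset.erase_insert_of_ne hij.symm
      simp only [ct, h1, if_false, smul_smul]
      rw [e1, ← add_smul]
      have hc := sg_comm (R := R) (t := insert j t) (Finset.mem_insert_of_mem hi)
        (Finset.mem_insert_self j t) hij
      have e2 : sg R j (insert j t) = sg R j t := by
        rw [← sg_erase_ge (lt_irrefl j), Finset.erase_insert hj]
      have e3 : sg R j ((insert j t).erase i) = sg R j (t.erase i) := by
        rw [e1, ← sg_erase_ge (t := insert j (t.erase i)) (lt_irrefl j), Finset.erase_insert h1]
      rw [e2, e3, Finset.erase_insert hj] at hc
      have q1 := sg_mul_self (R := R) j t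
      have q2 := sg_mul_self (R := R) j (t.erase i)
      have h0 : sg R i t * y i * sg R j (t.erase i) +
          sg R j t * (sg R i (insert j t) * y i) = 0 := by
        linear_combination (y i * sg R j (t.erase i) * sg R j t) * hc
          - (y i * sg R i t * sg R j (t.erase i)) * q1 - (y i * sg R j t * sg R i (insert j t)) * q2
      rw [h0, zero_smul]

theorem dk_tk (x : Fin s → R) (u e : ℕ) (F : Finset (Fin s) → M) :
    dk (fun j => x j ^ (u + e)) (tk x e F) = tk x e (dk (fun j => x j ^ u) F) := by
  funext t
  simp only [dk_apply, tk_apply, Finset.smul_sum, smul_smul]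
  refine Finset.sum_congr rfl fun j hj => ?_
  congr 1
  rw [← Finset.mul_prod_erase t x hj]
  ring

theorem dk_mem (y : Fin s → R) {L : Submodule R M} {F : Finset (Fin s) → M} (h : ∀ t, F t ∈ L)
    (t : Finset (Fin s)) : dk y F t ∈ L :=
  Submodule.sum_mem _ fun j _ => L.smul_mem _ (h _)

theorem tk_mem (x : Fin s → R) (e : ℕ) {L : Submodule R M} {F : Finset (Fin s) → M}
    (h : ∀ t, F t ∈ L) (t : Finset (Fin s)) : tk x e F t ∈ L :=
  L.smul_mem _ (h _)

theorem ct_mem (j : Fin s) {L : Submodule R M} {F : Finset (Fin s) → M}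
    (h : ∀ t, F t ∈ L) (t : Finset (Fin s)) : ct R j F t ∈ L := by
  unfold ct
  split_ifs
  · exact L.zero_mem
  · exact L.smul_mem _ (h _)

theorem dk_mem_pw (y : Fin s → R) (F : Finset (Fin s) → M) (t : Finset (Fin s)) :
    dk y F t ∈ pw M y t :=
  Submodule.sum_mem _ fun j hj => by
    rw [mul_comm, mul_smul]
    exact smul_mem_pw M y hj _

/-- homogeneous of degree `i` -/
def hg (i : ℕ) (F : Finset (Fin s) → M) : Prop := ∀ t, t.card ≠ i → F t = 0

/-- homogeneous of degree `i - 1` (zero for `i = 0`) -/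
def hg' (i : ℕ) (F : Finset (Fin s) → M) : Prop := ∀ t, t.card + 1 ≠ i → F t = 0

theorem hg'_succ {i : ℕ} {F : Finset (Fin s) → M} : hg' (i + 1) F ↔ hg i F := by
  simp [hg', hg]

theorem hg'_zero {F : Finset (Fin s) → M} (h : hg' 0 F) : F = 0 := by
  funext t; exact h t (by omega)

theorem hg.dk {i : ℕ} {F : Finset (Fin s) → M} (h : hg i F) (y : Fin s → R) :
    hg (i + 1) (dk y F) := by
  intro t ht
  rw [dk_apply]
  refine Finset.sum_eq_zero fun j hj => ?_
  rw [h _ (by rw [Finset.card_erase_of_mem hj]; have := Finset.card_pos.2 ⟨j, hj⟩; omega), smul_zero]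

theorem hg'.dk {i : ℕ} {F : Finset (Fin s) → M} (h : hg' i F) (y : Fin s → R) :
    hg i (_root_.dk y F) := by
  cases i with
  | zero => rw [hg'_zero h, map_zero]; intro t _; rfl
  | succ i => exact (hg'_succ.1 h).dk y

theorem hg.ct {i : ℕ} {F : Finset (Fin s) → M} (h : hg (i + 1) F) (j : Fin s) :
    hg i (ct R j F) := by
  intro t ht
  unfold _root_.ct
  split_ifs with hj
  · rfl
  · rw [h _ (by rw [Finset.card_insert_of_notMem hj]; omega), smul_zero]

theorem hg.tk {i : ℕ} {F : Finset (Fin s) → M} (h : hg i F) (x : Fin s → R) (e : ℕ) :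
    hg i (tk x e F) := by
  intro t ht
  rw [tk_apply, h t ht, smul_zero]

theorem hg'.tk {i : ℕ} {F : Finset (Fin s) → M} (h : hg' i F) (x : Fin s → R) (e : ℕ) :
    hg' i (_root_.tk x e F) := by
  intro t ht
  rw [tk_apply, h t ht, smul_zero]

theorem hg.add {i : ℕ} {F G : Finset (Fin s) → M} (h : hg i F) (h' : hg i G) : hg i (F + G) := by
  intro t ht
  rw [Pi.add_apply, h t ht, h' t ht, add_zero]

theorem hg.neg {i : ℕ} {F : Finset (Fin s) → M} (h : hg i F) : hg i (- F) := by
  intro t ht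
  rw [Pi.neg_apply, h t ht, neg_zero]

theorem hg.sub {i : ℕ} {F G : Finset (Fin s) → M} (h : hg i F) (h' : hg i G) : hg i (F - G) := by
  intro t ht
  rw [Pi.sub_apply, h t ht, h' t ht, sub_zero]

theorem hg'.add {i : ℕ} {F G : Finset (Fin s) → M} (h : hg' i F) (h' : hg' i G) :
    hg' i (F + G) := by
  intro t ht
  rw [Pi.add_apply, h t ht, h' t ht, add_zero]

theorem hg.smul {i : ℕ} {F : Finset (Fin s) → M} (h : hg i F) (r : R) : hg i (r • F) := by
  intro t ht
  rw [Pi.smul_apply, h t ht, smul_zero]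

/-- choice of a homogeneous witness -/
theorem hg.choose_ad {i : ℕ} {G : Finset (Fin s) → M} (hG : hg i G) {L : Submodule R M} {r : R}
    (h : ∀ t, G t ∈ ad L r) : ∃ l : Finset (Fin s) → M, hg i l ∧ ∀ t, G t - r • l t ∈ L := by
  classical
  choose l hl using fun t => mem_ad.1 (h t)
  refine ⟨fun t => if t.card = i then l t else 0, fun t ht => by simp [ht], fun t => ?_⟩
  by_cases ht : t.card = i
  · simpa [ht] using hl t
  · simp [ht, hG t ht]

end TotalKoszul

section QP

variable {M : Type} [AddCommGroup M] [Module R M] {s : ℕ} {I : Ideal R} {x : Fin s → R}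
  [IsNoetherianRing R]

theorem dk_tk' (x : Fin s → R) {u e v : ℕ} (h : v = u + e) (F : Finset (Fin s) → M) :
    dk (fun j => x j ^ v) (tk x e F) = tk x e (dk (fun j => x j ^ u) F) := by
  subst h; exact dk_tk x u e F

theorem sat_kill {L : Submodule R M} (hk : kl I L) (hxI : ∀ j, x j ∈ I) {G : Finset (Fin s) → M}
    (hG : ∀ t, G t ∈ sat I L) (h0 : G ∅ = 0) (t : Finset (Fin s)) : tk x 1 G t ∈ L := by
  rw [tk_apply, pow_one]
  rcases t.eq_empty_or_nonempty with rfl | ⟨j, hj⟩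
  · rw [h0, smul_zero]; exact L.zero_mem
  · refine hk _ (hG t) _ ?_
    rw [← Finset.mul_prod_erase t x hj]
    exact I.mul_mem_right _ (hxI j)

theorem sg_singleton (j : Fin s) : sg R j {j} = 1 := by
  simp [sg, Finset.filter_singleton]

theorem hg_zero_sat {L : Submodule R M} {y : Fin s → R} {j : Fin s} (hfr : fr I L (y j))
    {F : Finset (Fin s) → M} (hF : hg 0 F) (hD : ∀ t, dk y F t ∈ L) (t : Finset (Fin s)) :
    F t ∈ sat I L := by
  rcases t.eq_empty_or_nonempty with rfl | h
  · apply hfr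
    have := hD {j}
    rw [dk_apply, Finset.sum_singleton, sg_singleton, one_mul] at this
    simpa using this
  · rw [hF t (by simpa using h.ne_empty)]
    exact (sat I L).zero_mem

/-- hypotheses for lemma Q -/
def HQ (I : Ideal R) (x : Fin s → R) : ℕ → Submodule R M → Prop
  | 0, L => kl I L ∧ ∃ j, fr I L (x j)
  | (i + 1), L => kl I L ∧ ∃ j, fr I L (x j) ∧ ∀ u, 0 < u → HQ I x i (ad L (x j ^ u))

theorem lemQ (hxI : ∀ j, x j ∈ I) : ∀ (i : ℕ) (L : Submodule R M), HQ I x i L → ∀ u, 0 < u →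
    ∀ F : Finset (Fin s) → M, hg i F → (∀ t, dk (fun j => x j ^ u) F t ∈ L) → ∀ b ∈ I,
    ∃ (e : ℕ) (k : Finset (Fin s) → M), hg' i k ∧
      ∀ t, b • tk x e F t - dk (fun j => x j ^ (u + e)) k t ∈ L := by
  intro i
  induction i with
  | zero =>
    rintro L ⟨hk, j, hj⟩ u hu F hF hD b hb
    refine ⟨0, 0, fun _ _ => rfl, fun t => ?_⟩
    rw [map_zero, Pi.zero_apply, sub_zero, tk_apply, pow_zero, one_smul]
    exact hk _ (hg_zero_sat (y := fun j => x j ^ u) (hj.pow u) hF hD t) b hb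
  | succ i ih =>
    rintro L ⟨hk, j, hj, hQ⟩ u hu F hF hD b hb
    have hDh : ∀ t, dk (fun j => x j ^ u) (ct R j F) t ∈ ad L (x j ^ u) := by
      intro t
      have h1 := dk_ct (fun j => x j ^ u) j F t
      rw [eq_sub_of_add_eq h1]
      exact (ad L _).sub_mem (smul_mem_ad L (x j ^ u) (F t)) (le_ad _ _ (ct_mem j hD t))
    obtain ⟨e, k, hkg, hek⟩ := ih _ (hQ u hu) u hu _ (hF.ct (R := R) j) hDh b hb
    obtain ⟨l, hl, hl'⟩ := hg.choose_ad (i := i)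
      (G := b • tk x e (ct R j F) - dk (fun j => x j ^ (u + e)) k)
      ((((hF.ct (R := R) j).tk x e).smul b).sub (hkg.dk _)) hek
    have hsat : ∀ t, (b • tk x e F - dk (fun j => x j ^ (u + e)) l) t ∈ sat I L := by
      intro t
      apply (hj.pow u)
      have h1 := dk_mem (fun j => x j ^ (u + e)) (F := b • tk x e (ct R j F) -
        dk (fun j => x j ^ (u + e)) k - (x j ^ u) • l) hl' t
      have h2 : dk (fun j => x j ^ u) (ct R j F) =
          (x j ^ u) • F - ct R j (dk (fun j => x j ^ u) F) := by
        funext t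
        exact eq_sub_of_add_eq (dk_ct (fun j => x j ^ u) j F t)
      rw [map_sub, map_sub, dk_dk, map_smul, map_smul, dk_tk, h2, map_sub, map_smul] at h1
      have h3 := L.smul_mem b (tk_mem x e (ct_mem (R := R) j hD) t)
      have := L.add_mem h1 h3
      convert this using 1
      simp only [Pi.sub_apply, Pi.smul_apply, Pi.zero_apply]
      module
    refine ⟨e + 1, tk x 1 l, hg'_succ.2 (hl.tk x 1), fun t => ?_⟩
    have h4 := sat_kill (x := x) hk hxI hsat (by
      rw [Pi.sub_apply, Pi.smul_apply, hF.tk x e ∅ (by simp), (hl.dk _) ∅ (by simp)]; simp) t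
    rw [dk_tk' x (add_assoc u e 1).symm, add_comm e 1, ← tk_tk]
    rw [map_sub, map_smul] at h4
    exact h4

/-- hypotheses for lemma P -/
def HP (I : Ideal R) (x : Fin s → R) : ℕ → Submodule R M → Prop
  | 0, L => kl I L ∧ ∃ j, fr I L (x j)
  | (i + 1), L => HQ I x (i + 1) L ∧ kl I L ∧
      (∃ j, fr I L (x j) ∧ HP I x i (ad L (x j))) ∧
      ∀ T : Finset (Fin s), T.card = i + 2 → ∀ m ∈ sat I L, m ∈ pw M x T → m ∈ L

theorem lemP (hxI : ∀ j, x j ∈ I) : ∀ (i : ℕ) (L : Submodule R M), HP I x i L → ∀ u,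
    ∀ F : Finset (Fin s) → M, hg i F → (∀ t, dk (fun j => x j ^ (u + 1)) F t ∈ L) →
    ∃ (e : ℕ) (g k : Finset (Fin s) → M), hg i g ∧ (∀ t, dk x g t ∈ L) ∧ hg' i k ∧
      ∀ t, tk x e F t - tk x (u + e) g t - dk (fun j => x j ^ (u + 1 + e)) k t ∈ L := by
  intro i
  induction i with
  | zero =>
    rintro L ⟨hk, j, hj⟩ u F hF hD
    have hs := hg_zero_sat (y := fun j => x j ^ (u + 1)) (hj.pow (u + 1)) hF hD
    refine ⟨0, F, 0, hF, fun t => ?_, fun _ _ => rfl, fun t => ?_⟩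
    · refine Submodule.sum_mem _ fun i _ => ?_
      exact hk _ (hs _) _ (I.mul_mem_left _ (hxI i))
    · rw [map_zero, Pi.zero_apply, sub_zero, tk_apply, pow_zero, one_smul, tk_apply]
      rcases t.eq_empty_or_nonempty with rfl | h
      · simp
      · rw [hF t (by simpa using h.ne_empty)]; simp
  | succ i ih =>
    rintro L ⟨hQ, hk, ⟨j, hj, hP⟩, hsm⟩ u F hF hD
    obtain ⟨e, k, hkg, hek⟩ := lemQ hxI _ L hQ (u + 1) (by omega) F hF hD (x j) (hxI j)
    rw [hg'_succ] at hkg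
    have hDk : ∀ t, dk (fun j => x j ^ (u + e + 1)) k t ∈ ad L (x j) := by
      intro t
      have := (ad L (x j)).sub_mem (smul_mem_ad L (x j) (tk x e F t)) (le_ad L (x j) (hek t))
      rw [show u + e + 1 = u + 1 + e by omega]
      convert this using 1
      module
    obtain ⟨e', c, l, hc, hDc, hl, hcl⟩ := ih _ hP (u + e) k hkg hDk
    obtain ⟨w, hw, hw'⟩ := hg.choose_ad (i := i)
      (G := tk x e' k - tk x (u + e + e') c - dk (fun j => x j ^ (u + e + 1 + e')) l)
      (((hkg.tk x e').sub (hc.tk x _)).sub (hl.dk _)) hcl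
    obtain ⟨g, hg1, hg2⟩ := hg.choose_ad (i := i + 1) (hc.dk x) hDc
    have hsat : ∀ t, (tk x (e' + e) F - tk x (u + e + e') g -
        dk (fun j => x j ^ (u + e + 1 + e')) w) t ∈ sat I L := by
      intro t
      apply hj
      have h1 := dk_mem (fun j => x j ^ (u + e + 1 + e')) (F := tk x e' k - tk x (u + e + e') c -
        dk (fun j => x j ^ (u + e + 1 + e')) l - x j • w) hw' t
      rw [map_sub, map_sub, map_sub, dk_dk, map_smul, dk_tk,
        dk_tk' x (show u + e + 1 + e' = 1 + (u + e + e') by omega)] at h1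
      simp only [pow_one] at h1
      have h2 := tk_mem x (u + e + e') (F := dk x c - x j • g) hg2 t
      have h3 := tk_mem x e' (F := x j • tk x e F - dk (fun j => x j ^ (u + 1 + e)) k) hek t
      rw [show u + 1 + e = u + e + 1 by omega, map_sub, map_smul, tk_tk] at h3
      rw [map_sub, map_smul] at h2
      have := L.add_mem (L.add_mem h1 h2) h3
      convert this using 1
      simp only [Pi.sub_apply, Pi.smul_apply, Pi.zero_apply]
      module
    refine ⟨e + e' + 1, g, tk x 1 w, hg1, fun t => ?_, hg'_succ.2 (hw.tk x 1), fun t => ?_⟩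
    · by_cases ht : t.card = i + 2
      · refine hsm t ht _ (hj _ ?_) (dk_mem_pw x g t)
        have h1 := dk_mem x (F := dk x c - x j • g) hg2 t
        rw [map_sub, dk_dk, map_smul] at h1
        have := L.neg_mem h1
        convert this using 1
        simp
      · rw [hg1.dk x t ht]; exact L.zero_mem
    · have h4 := sat_kill (x := x) hk hxI hsat (by
        rw [Pi.sub_apply, Pi.sub_apply, hF.tk x _ ∅ (by simp), hg1.tk x _ ∅ (by simp),
          (hw.dk _) ∅ (by simp)]; simp) t
      rw [dk_tk' x (show u + 1 + (e + e' + 1) = u + e + 1 + e' + 1 by omega)]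
      rw [map_sub, map_sub, tk_tk, tk_tk] at h4
      rw [show e + e' + 1 = 1 + (e' + e) by omega, show u + (1 + (e' + e)) = 1 + (u + e + e') by omega]
      exact h4

end QP

section WtoP

variable {M : Type} [AddCommGroup M] [Module R M] {s : ℕ} {I : Ideal R} {x : Fin s → R}
  [IsNoetherianRing R] {n : ℕ}

theorem pw_one (x : Fin s → R) (S : Finset (Fin s)) :
    pw M (fun j => x j ^ 1) S = pw M x S := by simp

theorem pw_update (x : Fin s → R) (α : Fin s → ℕ) (S : Finset (Fin s)) {j : Fin s} (hj : j ∉ S)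
    (u : ℕ) : pw M (fun i => x i ^ Function.update α j u i) (insert j S) =
      ad (pw M (fun i => x i ^ α i) S) (x j ^ u) := by
  rw [pw_insert, Function.update_self]
  congr 1
  refine pw_congr M fun i hi => ?_
  have : i ≠ j := fun h => hj (h ▸ hi)
  rw [Function.update_of_ne this]

theorem exists_notMem_of_card {S : Finset (Fin s)} (h : S.card < s) : ∃ j, j ∉ S := by
  by_contra hc
  push Not at hc
  have : S = Finset.univ := Finset.eq_univ_iff_forall.2 hc
  rw [this] at h
  simp at h

theorem HQ_of (hF : FR M I x Finset.univ) (hW : WW M I x n Finset.univ) (hns : n ≤ s) :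
    ∀ (i : ℕ) (S : Finset (Fin s)) (α : Fin s → ℕ), (∀ j, 0 < α j) → S.card + i < n →
      HQ I x i (pw M (fun j => x j ^ α j) S) := by
  intro i
  induction i with
  | zero =>
    intro S α hα hS
    obtain ⟨j, hj⟩ := exists_notMem_of_card (S := S) (by omega)
    exact ⟨hW S (Finset.subset_univ _) hS α hα, j,
      FR.pow M hF α (Finset.subset_univ _) (Finset.mem_univ _) hj⟩
  | succ i ih =>
    intro S α hα hS
    obtain ⟨j, hj⟩ := exists_notMem_of_card (S := S) (by omega)
    refine ⟨hW S (Finset.subset_univ _) (by omega) α hα, j,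
      FR.pow M hF α (Finset.subset_univ _) (Finset.mem_univ _) hj, fun u hu => ?_⟩
    rw [← pw_update x α S hj u]
    refine ih _ _ (fun i => ?_) (by rw [Finset.card_insert_of_notMem hj]; omega)
    by_cases h : i = j
    · rw [h, Function.update_self]; exact hu
    · rw [Function.update_of_ne h]; exact hα i

theorem pw_int (hxI : ∀ j, x j ∈ I) (hF : FR M I x Finset.univ) (hW : WW M I x n Finset.univ)
    (S : Finset (Fin s)) (T : Finset (Fin s)) : (S ∪ T).card ≤ n → ∀ m ∈ sat I (pw M x S),
      m ∈ pw M x (S ∪ T) → m ∈ pw M x S := by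
  induction T using Finset.induction_on with
  | empty => intro _ m _ h; simpa using h
  | insert j T hj ih =>
    intro hc m hm hm'
    rw [Finset.union_insert] at hc hm'
    by_cases h : j ∈ S ∪ T
    · rw [Finset.insert_eq_of_mem h] at hc hm'
      exact ih hc m hm hm'
    · rw [Finset.card_insert_of_notMem h] at hc
      refine ih (by omega) m hm ?_
      rw [pw_insert] at hm'
      refine kl_inter (hxI j) (hF _ (Finset.subset_univ _) j (Finset.mem_univ _) h) ?_
        (sat_mono I (pw_mono M x Finset.subset_union_left) hm) hm'
      rw [← pw_one]
      exact hW _ (Finset.subset_univ _) (by omega) (fun _ => 1) (fun _ => one_pos)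

theorem HP_of (hxI : ∀ j, x j ∈ I) (hF : FR M I x Finset.univ) (hW : WW M I x n Finset.univ)
    (hns : n ≤ s) : ∀ (i : ℕ) (S : Finset (Fin s)), S.card + i < n → HP I x i (pw M x S) := by
  intro i
  have hk : ∀ S : Finset (Fin s), S.card < n → kl I (pw M x S) := fun S hS => by
    rw [← pw_one]
    exact hW _ (Finset.subset_univ _) (by omega) (fun _ => 1) (fun _ => one_pos)
  induction i with
  | zero =>
    intro S hS
    obtain ⟨j, hj⟩ := exists_notMem_of_card (S := S) (by omega)
    exact ⟨hk S hS, j, hF _ (Finset.subset_univ _) j (Finset.mem_univ _) hj⟩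
  | succ i ih =>
    intro S hS
    obtain ⟨j, hj⟩ := exists_notMem_of_card (S := S) (by omega)
    refine ⟨?_, hk S (by omega), ⟨j, hF _ (Finset.subset_univ _) j (Finset.mem_univ _) hj, ?_⟩, ?_⟩
    · rw [← pw_one]
      exact HQ_of hF hW hns (i + 1) S (fun _ => 1) (fun _ => one_pos) hS
    · rw [← pw_insert]
      exact ih _ (by rw [Finset.card_insert_of_notMem hj]; omega)
    · intro T hT m hm hmT
      refine pw_int hxI hF hW S T ?_ m hm (pw_mono M x Finset.subset_union_right hmT)
      have := Finset.card_union_le S T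
      omega

/-- The elementary form of surjectivity of `λ^i`. -/
def PP (M : Type) [AddCommGroup M] [Module R M] (x : Fin s → R) (i : ℕ) : Prop :=
  ∀ u, ∀ F : Finset (Fin s) → M, hg i F → dk (fun j => x j ^ (u + 1)) F = 0 →
    ∃ (e : ℕ) (g k : Finset (Fin s) → M), hg i g ∧ dk x g = 0 ∧ hg' i k ∧
      tk x e F - tk x (u + e) g - dk (fun j => x j ^ (u + 1 + e)) k = 0

theorem PP_of_WW (hxI : ∀ j, x j ∈ I) (hF : FR M I x Finset.univ) (hW : WW M I x n Finset.univ)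
    (hns : n ≤ s) (i : ℕ) (hi : i < n) : PP M x i := by
  intro u F hFg hFd
  have hP := HP_of hxI hF hW hns i ∅ (by simpa using hi)
  rw [pw_empty] at hP
  obtain ⟨e, g, k, h1, h2, h3, h4⟩ := lemP hxI i ⊥ hP u F hFg (fun t => by rw [hFd]; simp)
  exact ⟨e, g, k, h1, funext h2, h3, funext h4⟩

end WtoP

section PtoW

variable {M : Type} [AddCommGroup M] [Module R M] {s : ℕ} {I : Ideal R} {x : Fin s → R}
  [IsNoetherianRing R] {n : ℕ}

/-- relative filter regularity -/
def FRr (I : Ideal R) (x : Fin s → R) (L : Submodule R M) (S : Finset (Fin s)) : Prop :=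
  ∀ T ⊆ S, ∀ j ∈ S, j ∉ T → ∀ δ : Fin s → ℕ, fr I (L ⊔ pw M (fun i => x i ^ δ i) T) (x j)

theorem ad_sup_pw (x : Fin s → R) (δ : Fin s → ℕ) (L : Submodule R M) (T : Finset (Fin s))
    {j : Fin s} (hj : j ∉ T) (d : ℕ) : ad L (x j ^ d) ⊔ pw M (fun i => x i ^ δ i) T =
      L ⊔ pw M (fun i => x i ^ Function.update δ j d i) (insert j T) := by
  rw [pw_update x δ T hj, sup_ad, ad_sup]

theorem sup_pw_insert (x : Fin s → R) (δ : Fin s → ℕ) (L : Submodule R M) (T : Finset (Fin s))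
    (j : Fin s) : L ⊔ pw M (fun i => x i ^ δ i) (insert j T) =
      ad (L ⊔ pw M (fun i => x i ^ δ i) T) (x j ^ δ j) := by
  rw [pw_insert, sup_ad]

theorem FRr.step {L : Submodule R M} {S : Finset (Fin s)} {j : Fin s} (hj : j ∉ S)
    (h : FRr I x L (insert j S)) (d : ℕ) : FRr I x (ad L (x j ^ d)) S := by
  intro T hT i hi hiT δ
  rw [ad_sup_pw x δ L T (fun h => hj (hT h))]
  refine h _ (Finset.insert_subset_insert j hT) i (Finset.mem_insert_of_mem hi) ?_ _
  rw [Finset.mem_insert, not_or]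
  exact ⟨fun h => hj (h ▸ hi), hiT⟩

theorem sat_unif {ι : Type} [Finite ι] {L : Submodule R M} {G : ι → M} (h : ∀ i, G i ∈ sat I L) :
    ∃ t : ℕ, ∀ i, ∀ b ∈ I ^ t, b • G i ∈ L := by
  classical
  cases nonempty_fintype ι
  choose e he using h
  exact ⟨Finset.univ.sup e, fun i b hb =>
    he i b (Ideal.pow_le_pow_right (Finset.le_sup (Finset.mem_univ i)) hb)⟩

theorem lemExt (hxI : ∀ j, x j ∈ I) (v : ℕ) (S : Finset (Fin s)) : ∀ (L : Submodule R M) (m : M),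
    FRr I x L S → m ∈ sat I (L ⊔ pw M (fun j => x j ^ v) S) →
    ∃ (e : ℕ) (F : Finset (Fin s) → M), hg S.card F ∧
      (∀ t, dk (fun j => x j ^ (v + e)) F t ∈ L) ∧ F S = (∏ j ∈ S, x j) ^ e • m := by
  classical
  induction S using Finset.induction_on with
  | empty =>
    intro L m _ hm
    rw [pw_empty, sup_bot_eq] at hm
    obtain ⟨t, ht⟩ := hm
    refine ⟨t, fun T => if T = ∅ then m else 0, fun T hT => ?_, fun T => ?_, by simp⟩
    · have : T ≠ ∅ := fun h => hT (by rw [h])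
      simp [this]
    · refine Submodule.sum_mem _ fun j hj => ?_
      beta_reduce
      split_ifs
      · refine ht _ (Ideal.mul_mem_left _ _ ?_)
        exact Ideal.pow_le_pow_right (Nat.le_add_left t v) (Ideal.pow_mem_pow (hxI j) _)
      · rw [smul_zero]; exact L.zero_mem
  | insert j S hj ih =>
    intro L m hFR hm
    rw [sup_pw_insert x (fun _ => v), ad_sup] at hm
    obtain ⟨e, c, hc, hDc, hcS⟩ := ih _ m (hFR.step hj v) hm
    set y : Fin s → R := fun j => x j ^ (v + e) with hy
    set c1 : Finset (Fin s) → M := fun T => if j ∈ T then 0 else x j ^ e • c T with hc1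
    have hc1g : hg S.card c1 := fun T hT => by simp [hc1, hc T hT]
    have hDin : ∀ T, j ∈ T → dk y c1 T = y j • (sg R j T • c1 (T.erase j)) := by
      intro T hT
      rw [dk_apply, Finset.sum_eq_single j]
      · rw [smul_smul, mul_comm]
      · intro i hi hij
        simp [hc1, hT, hij.symm]
      · exact fun h => absurd hT h
    have hDc1 : ∀ T, dk y c1 T ∈ ad L (y j) := by
      intro T
      by_cases hT : j ∈ T
      · rw [hDin T hT]
        exact smul_mem_ad L (y j) _
      · have h1 : dk y c1 T = x j ^ e • dk y c T := by
          rw [dk_apply, dk_apply, Finset.smul_sum]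
          refine Finset.sum_congr rfl fun i hi => ?_
          simp only [hc1, Finset.mem_erase, hT, and_false, if_false]
          rw [smul_comm]
        rw [h1]
        obtain ⟨w, hw⟩ := mem_ad.1 (hDc T)
        refine mem_ad.2 ⟨w, ?_⟩
        have := L.smul_mem (x j ^ e) hw
        convert this using 1
        simp only [hy, pow_add, smul_sub, smul_smul]
        rw [mul_comm]
    obtain ⟨f0, hf0, hf0'⟩ := hg.choose_ad (hc1g.dk y) hDc1
    set f : Finset (Fin s) → M := fun T => if j ∈ T then sg R j T • c1 (T.erase j) else f0 T with hf
    have hfg : hg (S.card + 1) f := by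
      intro T hT
      by_cases hjT : j ∈ T
      · simp only [hf, hjT, if_true]
        rw [hc1g _ (by rw [Finset.card_erase_of_mem hjT]
                       have := Finset.card_pos.2 ⟨j, hjT⟩
                       omega), smul_zero]
      · simp only [hf, hjT, if_false]
        exact hf0 T hT
    have hff : ∀ T, dk y c1 T - y j • f T ∈ L := by
      intro T
      by_cases hjT : j ∈ T
      · simp only [hf, hjT, if_true]
        rw [hDin T hjT, sub_self]
        exact L.zero_mem
      · simp only [hf, hjT, if_false]
        exact hf0' T
    have hfrj : fr I L (x j) := by
      have := hFR ∅ (Finset.empty_subset _) j (Finset.mem_insert_self _ _) (by simp) (fun _ => 0)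
      rwa [pw_empty, sup_bot_eq] at this
    have hsat : ∀ T, dk y f T ∈ sat I L := by
      intro T
      apply hfrj.pow (v + e)
      have h1 := dk_mem y (F := dk y c1 - y j • f) hff T
      rw [map_sub, dk_dk, map_smul] at h1
      have := L.neg_mem h1
      convert this using 1
      simp [hy]
    obtain ⟨t, ht⟩ := sat_unif hsat
    refine ⟨e + t, sg R j (insert j S) • tk x t f, ?_, fun T => ?_, ?_⟩
    · rw [Finset.card_insert_of_notMem hj]
      exact (hfg.tk x t).smul _
    · rw [map_smul, dk_tk' x (add_assoc v e t).symm]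
      refine L.smul_mem _ ?_
      rw [tk_apply]
      rcases T.eq_empty_or_nonempty with rfl | ⟨i, hi⟩
      · rw [dk_apply, Finset.sum_empty, smul_zero]; exact L.zero_mem
      · refine ht _ _ (Ideal.pow_mem_pow ?_ _)
        rw [← Finset.mul_prod_erase T x hi]
        exact I.mul_mem_right _ (hxI i)
    · have h1 : j ∈ insert j S := Finset.mem_insert_self _ _
      rw [Pi.smul_apply, tk_apply]
      simp only [hf, h1, if_true, hc1, Finset.erase_insert hj, hj, if_false, hcS, smul_smul]
      rw [Finset.prod_insert hj]
      congr 1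
      have := sg_mul_self (R := R) j (insert j S)
      linear_combination (x j * ∏ j ∈ S, x j) ^ t * x j ^ e * (∏ j ∈ S, x j) ^ e * this

theorem lemLim (S : Finset (Fin s)) : ∀ (L Q : Submodule R M) (m : M) (α e : Fin s → ℕ),
    FRr I x L S →
    (∀ T ⊆ S, T ≠ S → ∀ δ : Fin s → ℕ, (∀ j, 0 < δ j) → kl I (L ⊔ pw M (fun j => x j ^ δ j) T)) →
    (∀ j, x j ∈ I) → (∀ j, 0 < α j) →
    (∏ j ∈ S, x j ^ e j) • m ∈ L ⊔ pw M (fun j => x j ^ (α j + e j)) S →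
    L ⊔ pw M (fun j => x j ^ α j) S ≤ Q →
    (∀ j ∈ S, sat I (L ⊔ pw M (fun j => x j ^ α j) (S.erase j)) ≤ Q) → m ∈ Q := by
  classical
  induction S using Finset.induction_on with
  | empty =>
    intro L Q m α e _ _ _ _ hm hQ _
    rw [pw_empty, sup_bot_eq] at hm hQ
    exact hQ (by simpa using hm)
  | insert i S hi ih =>
    intro L Q m α e hFR hK hxI hα hm hQ hsat
    set d := α i + e i with hd
    have hdpos : 0 < d := by have := hα i; omega
    set N := L ⊔ pw M (fun j => x j ^ α j) S with hN
    have hiS : i ∈ insert i S := Finset.mem_insert_self _ _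
    let Q' : Submodule R M :=
      { carrier := {y | ∃ w, x i • y - x i ^ d • w ∈ N ∧ x i ^ (α i - 1) • w ∈ Q}
        zero_mem' := ⟨0, by simp, by simp⟩
        add_mem' := by
          rintro a b ⟨w, h1, h2⟩ ⟨w', h1', h2'⟩
          refine ⟨w + w', ?_, ?_⟩
          · have := N.add_mem h1 h1'
            convert this using 1
            module
          · rw [smul_add]; exact Q.add_mem h2 h2'
        smul_mem' := by
          rintro c a ⟨w, h1, h2⟩
          refine ⟨c • w, ?_, ?_⟩
          · have := N.smul_mem c h1
            convert this using 1
            module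
          · rw [smul_comm]; exact Q.smul_mem c h2 }
    have hm' : x i ^ e i • m ∈ Q' := by
      refine ih (ad L (x i ^ d)) Q' (x i ^ e i • m) α e (hFR.step hi d) ?_ hxI hα ?_ ?_ ?_
      · intro T hT hne δ hδ
        have hiT : i ∉ T := fun h => hi (hT h)
        rw [ad_sup_pw x δ L T hiT]
        refine hK _ (Finset.insert_subset_insert i hT) (fun h => hne ?_) _ (fun j => ?_)
        · rw [← Finset.erase_insert hiT, h, Finset.erase_insert hi]
        · by_cases hji : j = i
          · rw [hji, Function.update_self]; exact hdpos
          · rw [Function.update_of_ne hji]; exact hδ j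
      · rw [Finset.prod_insert hi, sup_pw_insert x (fun j => α j + e j), ad_sup] at hm
        convert hm using 1
        rw [smul_smul, mul_comm]
      · rw [← ad_sup]
        intro y hy
        obtain ⟨w, hw⟩ := mem_ad.1 hy
        refine ⟨x i • w, ?_, ?_⟩
        · have := N.smul_mem (x i) hw
          convert this using 1
          module
        · apply hQ
          rw [smul_smul, ← pow_succ, Nat.sub_add_cancel (hα i), sup_pw_insert]
          exact smul_mem_ad N _ w
      · intro j hj y hy
        have hji : j ≠ i := fun h => hi (h ▸ hj)
        set Nj := L ⊔ pw M (fun j => x j ^ α j) (S.erase j) with hNj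
        have hiT : i ∉ S.erase j := fun h => hi (Finset.mem_of_mem_erase h)
        have hNjN : Nj ≤ N := sup_le_sup_left (pw_mono M _ (Finset.erase_subset _ _)) _
        have hins : (insert i S).erase j = insert i (S.erase j) :=
          Finset.erase_insert_of_ne hji.symm
        have hkl : kl I (ad Nj (x i ^ d)) := by
          rw [hNj, ad_sup, ad_sup_pw x α L _ hiT]
          refine hK _ (Finset.insert_subset_insert i (Finset.erase_subset _ _)) (fun h => ?_) _
            (fun l => ?_)
          · have : j ∈ insert i (S.erase j) := h ▸ Finset.mem_insert_of_mem hj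
            simp [hji] at this
          · by_cases hli : l = i
            · rw [hli, Function.update_self]; exact hdpos
            · rw [Function.update_of_ne hli]; exact hα l
        rw [← ad_sup] at hy
        obtain ⟨w, hw⟩ := mem_ad.1 (hkl y hy _ (hxI i))
        refine ⟨w, hNjN hw, hsat j (Finset.mem_insert_of_mem hj) ?_⟩
        rw [hins, sup_pw_insert]
        change _ ∈ sat I (ad Nj _)
        refine sat_of_one fun b hb => ?_
        obtain ⟨wb, hwb⟩ := mem_ad.1 (hkl y hy b hb)
        have hfr : fr I Nj (x i) := hFR _ ((Finset.erase_subset _ _).trans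
          (Finset.subset_insert _ _)) i hiS hiT α
        have h1 : b • w - x i • wb ∈ sat I Nj := by
          apply hfr.pow d
          have := Nj.sub_mem (Nj.smul_mem (x i) hwb) (Nj.smul_mem b hw)
          convert this using 1
          module
        have h2 := sat_mono I (le_ad Nj (x i ^ α i)) ((sat I Nj).smul_mem (x i ^ (α i - 1)) h1)
        have h3 := le_sat I _ (smul_mem_ad Nj (x i ^ α i) wb)
        have := (sat I (ad Nj (x i ^ α i))).add_mem h2 h3
        convert this using 1
        have hp : x i ^ α i = x i ^ (α i - 1) * x i := by
          rw [← pow_succ, Nat.sub_add_cancel (hα i)]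
        rw [hp]
        module
    obtain ⟨w, hw1, hw2⟩ := hm'
    have hfr : fr I N (x i) := hFR S (Finset.subset_insert _ _) i hiS hi α
    have h1 : m - x i ^ (α i - 1) • w ∈ sat I N := by
      apply hfr.pow (e i + 1)
      convert hw1 using 1
      have hp : x i ^ d = x i ^ (e i + 1) * x i ^ (α i - 1) := by
        rw [← pow_add]; congr 1; have := hα i; omega
      rw [hp, pow_succ]
      module
    have h2 := hsat i hiS
    rw [Finset.erase_insert hi] at h2
    have := Q.add_mem (h2 h1) hw2
    convert this using 1
    module

theorem prod_smul_pw (x : Fin s → R) (α e : Fin s → ℕ) (S : Finset (Fin s)) {m : M}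
    (hm : m ∈ pw M (fun j => x j ^ α j) S) :
    (∏ j ∈ S, x j ^ e j) • m ∈ pw M (fun j => x j ^ (α j + e j)) S := by
  have : pw M (fun j => x j ^ α j) S ≤ (pw M (fun j => x j ^ (α j + e j)) S).comap
      (LinearMap.lsmul R M (∏ j ∈ S, x j ^ e j)) := by
    refine pw_le M fun j hj m => ?_
    rw [Submodule.mem_comap, LinearMap.lsmul_apply, smul_smul, ← Finset.mul_prod_erase S _ hj]
    have := smul_mem_pw M (fun j => x j ^ (α j + e j)) hj ((∏ i ∈ S.erase j, x i ^ e i) • m)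
    convert this using 1
    rw [smul_smul]
    congr 1
    ring
  exact this hm

theorem smul_cocycle (hx : Ideal.span (Set.range x) = I) {g : Finset (Fin s) → M}
    (hg : dk x g = 0) (S : Finset (Fin s)) {b : R} (hb : b ∈ I) : b • g S ∈ pw M x S := by
  rw [← hx] at hb
  induction hb using Submodule.span_induction with
  | mem b hb =>
    obtain ⟨i, rfl⟩ := hb
    by_cases hi : i ∈ S
    · exact smul_mem_pw M x hi _
    · have h1 : dk x g (insert i S) = 0 := by rw [hg]; rfl
      rw [dk_apply, Finset.sum_insert hi, Finset.erase_insert hi] at h1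
      have h2 := eq_neg_of_add_eq_zero_left h1
      have h3 : (sg R i (insert i S) * x i) • g S ∈ pw M x S := by
        rw [h2]
        refine Submodule.neg_mem _ (Submodule.sum_mem _ fun j hj => ?_)
        rw [mul_comm, mul_smul]
        exact smul_mem_pw M x hj _
      have h4 := Submodule.smul_mem _ (sg R i (insert i S)) h3
      rw [smul_smul, ← mul_assoc, sg_mul_self, one_mul] at h4
      exact h4
  | zero => simp
  | add p q _ _ h1 h2 => rw [add_smul]; exact Submodule.add_mem _ h1 h2
  | smul c p _ h1 => rw [smul_assoc]; exact Submodule.smul_mem _ c h1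

theorem WW_of_PP (hx : Ideal.span (Set.range x) = I) (hF : FR M I x Finset.univ)
    (hP : ∀ i < n, PP M x i) : WW M I x n Finset.univ := by
  classical
  have hxI : ∀ j, x j ∈ I := fun j => hx ▸ Ideal.subset_span ⟨j, rfl⟩
  suffices H : ∀ k, ∀ S : Finset (Fin s), S.card = k → S.card < n → ∀ α : Fin s → ℕ,
      (∀ j, 0 < α j) → kl I (pw M (fun j => x j ^ α j) S) from
    fun S _ hS α hα => H _ S rfl hS α hα
  intro k
  induction k using Nat.strong_induction_on with
  | _ k IH =>
  intro S hSk hSn α hα m hm b hb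
  have hFRr : FRr I x (⊥ : Submodule R M) S := by
    intro T _ j _ hjT δ
    rw [bot_sup_eq]
    exact FR.pow M hF δ (Finset.subset_univ _) (Finset.mem_univ _) hjT
  have hprop : ∀ T ⊆ S, T ≠ S → ∀ δ : Fin s → ℕ, (∀ j, 0 < δ j) →
      kl I (pw M (fun j => x j ^ δ j) T) := by
    intro T hT hne δ hδ
    have := Finset.card_lt_card (Finset.ssubset_iff_subset_ne.2 ⟨hT, hne⟩)
    exact IH _ (by omega) T rfl (by omega) δ hδ
  set A := ∑ j, α j with hA
  have hαA : ∀ j, α j ≤ A := fun j => Finset.single_le_sum (fun _ _ => Nat.zero_le _)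
    (Finset.mem_univ j)
  have hm1 : (∏ j ∈ S, x j ^ (A + 1 - α j)) • m ∈ sat I (⊥ ⊔ pw M (fun j => x j ^ (A + 1)) S) := by
    obtain ⟨t, ht⟩ := hm
    refine ⟨t, fun b hb => ?_⟩
    rw [smul_comm, bot_sup_eq]
    have := prod_smul_pw x α (fun j => A + 1 - α j) S (ht b hb)
    convert this using 2
    funext j
    congr 1
    have := hαA j
    omega
  obtain ⟨e, F, hFg, hFd, hFS⟩ := lemExt hxI (A + 1) S ⊥ _ hFRr hm1
  obtain ⟨e', g, l, hgg, hgd, hl, heq⟩ := hP S.card hSn (A + e) F hFg (by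
    funext t
    have := hFd t
    rw [show A + 1 + e = A + e + 1 by omega] at this
    exact this)
  set Q : Submodule R M :=
    { carrier := {m | ∀ b ∈ I, b • m ∈ pw M (fun j => x j ^ α j) S}
      zero_mem' := fun b _ => by simp
      add_mem' := fun h h' b hb => by
        rw [smul_add]; exact Submodule.add_mem _ (h b hb) (h' b hb)
      smul_mem' := fun c m h b hb => by
        rw [smul_comm]; exact Submodule.smul_mem _ c (h b hb) } with hQ
  have hmQ : m - (∏ j ∈ S, x j ^ (α j - 1)) • g S ∈ Q := by
    refine lemLim S ⊥ Q _ α (fun j => (A + 1 - α j) + e + e') hFRr ?_ hxI hα ?_ ?_ ?_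
    · intro T hT hne δ hδ
      rw [bot_sup_eq]; exact hprop T hT hne δ hδ
    · rw [bot_sup_eq]
      have h1 := congrFun heq S
      rw [Pi.sub_apply, Pi.sub_apply, Pi.zero_apply, tk_apply, tk_apply, hFS, sub_eq_zero] at h1
      have h2 := dk_mem_pw (fun j => x j ^ (A + e + 1 + e')) l S
      rw [← h1] at h2
      convert h2 using 1
      · congr 1
        funext j
        congr 1
        have := hαA j
        omega
      · rw [smul_sub, smul_smul, smul_smul, smul_smul]
        congr 2
        · rw [← Finset.prod_pow, ← Finset.prod_pow, ← Finset.prod_mul_distrib,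
            ← Finset.prod_mul_distrib]
          refine Finset.prod_congr rfl fun j _ => ?_
          ring
        · rw [← Finset.prod_pow, ← Finset.prod_mul_distrib]
          refine Finset.prod_congr rfl fun j _ => ?_
          rw [← pow_add]
          congr 1
          have := hαA j
          have := hα j
          omega
    · rw [bot_sup_eq]
      exact fun y hy b _ => Submodule.smul_mem _ b hy
    · intro j hj y hy b hb
      rw [bot_sup_eq] at hy
      have h1 := hprop (S.erase j) (Finset.erase_subset _ _)
        (fun h => Finset.notMem_erase j S (h.symm ▸ hj)) α hα y hy b hb
      exact pw_mono M _ (Finset.erase_subset _ _) h1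
  have h1 := hmQ b hb
  have h2 := smul_cocycle hx hgd S hb
  rw [← pw_one] at h2
  have h3 := prod_smul_pw x (fun _ => 1) (fun j => α j - 1) S h2
  have h4 : (∏ j ∈ S, x j ^ (α j - 1)) • b • g S ∈ pw M (fun j => x j ^ α j) S := by
    convert h3 using 2
    funext j
    congr 1
    have := hα j
    omega
  have := Submodule.add_mem _ h1 h4
  convert this using 1
  module

end PtoW

section Bridges

variable {M : Type} [AddCommGroup M] [Module R M] {s : ℕ} {I : Ideal R} {x : Fin s → R}
  [IsNoetherianRing R] {n : ℕ}

theorem exists_perm (S : Finset (Fin s)) {j : Fin s} (hj : j ∉ S) :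
    ∃ (σ : Equiv.Perm (Fin s)) (i : Fin s), i.1 = S.card ∧ σ i = j ∧
      ∀ l, σ l ∈ S ↔ l < i := by
  classical
  have hc : S.card < s := by
    have := Finset.card_lt_univ_of_notMem hj
    simpa using this
  set i : Fin s := ⟨S.card, hc⟩ with hi
  have hcard : (Finset.Iio i).card = S.card := by simp [hi]
  let e : {l // l ∈ Finset.Iio i} ≃ {l // l ∈ S} := Finset.equivOfCardEq hcard
  set τ : Equiv.Perm (Fin s) := e.extendSubtype with hτ
  have h1 : ∀ l, τ l ∈ S ↔ l < i := by
    intro l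
    constructor
    · intro h
      by_contra hl
      exact e.extendSubtype_not_mem l (by simpa using hl) h
    · intro h
      exact e.extendSubtype_mem l (by simpa using h)
  have h2 : τ i ∉ S := by rw [h1]; exact lt_irrefl i
  refine ⟨τ.trans (Equiv.swap (τ i) j), i, rfl, by simp, fun l => ?_⟩
  rw [← h1, Equiv.trans_apply]
  by_cases ha : τ l = τ i
  · rw [ha, Equiv.swap_apply_left]; exact ⟨fun h => absurd h hj, fun h => absurd h h2⟩
  by_cases hb : τ l = j
  · rw [hb, Equiv.swap_apply_right]; exact ⟨fun h => absurd h h2, fun h => absurd h hj⟩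
  rw [Equiv.swap_apply_of_ne_of_ne ha hb]

theorem uncond_iff_FR : IsUncondFilterRegSeq I M x ↔ FR M I x Finset.univ := by
  classical
  constructor
  · intro h S _ j _ hj m hm
    obtain ⟨σ, i, _, hσi, hσ⟩ := exists_perm S hj
    have hp : pSpan M (x ∘ σ) i = pw M x S := by
      refine span_smul_top M x S _ ?_
      ext r
      constructor
      · rintro ⟨l, hl, rfl⟩
        exact ⟨σ l, (hσ l).2 hl, rfl⟩
      · rintro ⟨l, hl, rfl⟩
        refine ⟨σ.symm l, (hσ _).1 (by simpa using hl), by simp⟩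
    have := h σ i m
    rw [hp] at this
    exact this (by simpa [hσi] using hm)
  · intro h σ i m hm
    have hp : pSpan M (x ∘ σ) i = pw M x ((Finset.Iio i).map σ.toEmbedding) := by
      refine span_smul_top M x _ _ ?_
      rw [Set.image_comp]
      congr 1
      ext r
      simp
    rw [hp] at hm ⊢
    refine h _ (Finset.subset_univ _) (σ i) (Finset.mem_univ _) ?_ m hm
    simp

theorem WW_of_uncond (hns : n ≤ s) (hxI : ∀ j, x j ∈ I)
    (h : ∀ g : Fin n → Fin s, Function.Injective g → IsUncondWeakSeq I M (x ∘ g)) :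
    WW M I x n Finset.univ := by
  classical
  intro S _ hS α hα m hm b hb
  obtain ⟨j, hj⟩ := exists_notMem_of_card (S := S) (by omega)
  obtain ⟨σ, i, hiS, hσi, hσ⟩ := exists_perm S hj
  obtain ⟨t, ht⟩ := hm
  set g : Fin n → Fin s := fun k => σ (Fin.castLE hns k) with hg
  have hginj : Function.Injective g := σ.injective.comp (Fin.castLE_injective hns)
  set i' : Fin n := ⟨S.card, hS⟩ with hi'
  have hii' : Fin.castLE hns i' = i := Fin.ext hiS.symm
  set β : Fin n → ℕ := fun k => if k = i' then t + 1 else α (g k) with hβ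
  have hw := h g hginj 1 β (fun k => by simp only [hβ]; split_ifs <;> simp [hα]) i' m
  have hlt : ∀ k : Fin n, k < i' ↔ Fin.castLE hns k < i := by
    intro k; rw [← hii']; simp
  have hp : pSpan M (fun k => (x ∘ g) ((1 : Equiv.Perm (Fin n)) k) ^ β k) i' =
      pw M (fun j => x j ^ α j) S := by
    refine span_smul_top M _ S _ ?_
    ext r
    constructor
    · rintro ⟨l, hl, rfl⟩
      have hne : l ≠ i' := ne_of_lt hl
      refine ⟨g l, (hσ _).2 ((hlt l).1 hl), ?_⟩
      simp [hβ, hne]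
    · rintro ⟨l, hl, rfl⟩
      have h1 : σ.symm l < i := (hσ _).1 (by simpa using hl)
      have h2 : (σ.symm l).1 < n := by
        have := Fin.lt_def.1 h1
        omega
      have h3 : g ⟨(σ.symm l).1, h2⟩ = l := by
        simp only [hg]
        exact σ.apply_symm_apply l
      have h4 : (⟨(σ.symm l).1, h2⟩ : Fin n) < i' := (hlt _).2 h1
      refine ⟨⟨(σ.symm l).1, h2⟩, h4, ?_⟩
      simp [hβ, h4.ne, h3]
  rw [hp] at hw
  refine hw ?_ b hb
  refine ht _ ?_
  simp only [hβ, if_true]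
  exact Ideal.pow_le_pow_right (Nat.le_succ t) (Ideal.pow_mem_pow (hxI _) _)

theorem uncond_of_WW (hF : FR M I x Finset.univ) (hW : WW M I x n Finset.univ)
    (g : Fin n → Fin s) (hg : Function.Injective g) : IsUncondWeakSeq I M (x ∘ g) := by
  classical
  intro σ α hα i m hm b hb
  have hinj : Function.Injective (g ∘ σ) := hg.comp σ.injective
  set β : Fin s → ℕ := Function.extend (g ∘ σ) α (fun _ => 1) with hβ
  have hβg : ∀ k, β (g (σ k)) = α k := fun k => hinj.extend_apply α _ k
  have hβpos : ∀ j, 0 < β j := by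
    intro j
    by_cases h : ∃ k, (g ∘ σ) k = j
    · obtain ⟨k, rfl⟩ := h
      rw [Function.comp_apply, hβg]; exact hα k
    · rw [hβ, Function.extend_apply' _ _ _ h]; exact one_pos
  set S : Finset (Fin s) := (Finset.Iio i).map ⟨g ∘ σ, hinj⟩ with hS
  have hp : pSpan M (fun k => (x ∘ g) (σ k) ^ α k) i = pw M (fun j => x j ^ β j) S := by
    refine span_smul_top M _ S _ ?_
    ext r
    constructor
    · rintro ⟨l, hl, rfl⟩
      refine ⟨g (σ l), ?_, ?_⟩
      · have : g (σ l) ∈ S := Finset.mem_map.2 ⟨l, Finset.mem_Iio.2 hl, rfl⟩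
        exact this
      · simp [hβg]
    · rintro ⟨_, hl0, rfl⟩
      obtain ⟨l, hl1, rfl⟩ := Finset.mem_map.1 (Finset.mem_coe.1 hl0)
      have hl' : l < i := Finset.mem_Iio.1 hl1
      refine ⟨l, hl', ?_⟩
      simp [hβg]
  rw [hp] at hm ⊢
  have hnot : g (σ i) ∉ S := by
    intro h
    obtain ⟨l, hl, h'⟩ := Finset.mem_map.1 h
    have : l = i := hinj h'
    rw [this] at hl
    simp at hl
  have hfr := (FR.pow M hF β (Finset.subset_univ S) (Finset.mem_univ _) hnot).pow (α i)
  refine hW S (Finset.subset_univ _) ?_ β hβpos m (hfr m hm) b hb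
  simp [hS]

end Bridges

section LambdaBridge

variable {M : Type} [AddCommGroup M] [Module R M] {s : ℕ} {I : Ideal R} {x : Fin s → R}

/-- extension by zero -/
def exz {p : ℕ} (f : KM M s p) : Finset (Fin s) → M :=
  fun t => if h : t.card = p then f ⟨t, h⟩ else 0

/-- restriction to degree `p` -/
def rsz (p : ℕ) (F : Finset (Fin s) → M) : KM M s p := fun t => F t.1

theorem exz_hg {p : ℕ} (f : KM M s p) : hg p (exz f) := by
  intro t ht; simp [exz, ht]

theorem rsz_exz {p : ℕ} (f : KM M s p) : rsz p (exz f) = f := by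
  funext t; simp [rsz, exz, t.2]

theorem hg_ext {p : ℕ} {F G : Finset (Fin s) → M} (hF : hg p F) (hG : hg p G)
    (h : rsz p F = rsz p G) : F = G := by
  funext t
  by_cases ht : t.card = p
  · exact congrFun h ⟨t, ht⟩
  · rw [hF t ht, hG t ht]

theorem kd_rsz (y : Fin s → R) (p : ℕ) (F : Finset (Fin s) → M) :
    kd y p (rsz p F) = rsz (p + 1) (dk y F) := by
  funext t
  simp only [kd, rsz, LinearMap.coe_mk, AddHom.coe_mk, dk_apply, sg]
  exact Finset.sum_attach t.1 (fun j => ((-1 : R) ^ (t.1.filter (fun a => a < j)).card * y j) •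
    F (t.1.erase j))

theorem kt_rsz (y : Fin s → R) (e p : ℕ) (F : Finset (Fin s) → M) :
    kt y e p (rsz p F) = rsz p (tk y e F) := rfl

theorem rsz_mem_kZ {y : Fin s → R} {p : ℕ} {F : Finset (Fin s) → M} (hF : hg p F) :
    rsz p F ∈ kZ y M p ↔ dk y F = 0 := by
  rw [kZ, LinearMap.mem_ker, kd_rsz]
  constructor
  · intro h
    exact hg_ext (hF.dk y) (fun _ _ => rfl) h
  · intro h
    rw [h]; rfl

theorem rsz_mem_kB {y : Fin s → R} {p : ℕ} {F : Finset (Fin s) → M} (hF : hg p F) :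
    rsz p F ∈ kB y M p ↔ ∃ k, hg' p k ∧ F = dk y k := by
  cases p with
  | zero =>
    simp only [kB, Submodule.mem_bot]
    constructor
    · intro h
      refine ⟨0, fun _ _ => rfl, ?_⟩
      rw [map_zero]
      exact hg_ext hF (fun _ _ => rfl) h
    · rintro ⟨k, hk, rfl⟩
      rw [hg'_zero hk, map_zero]; rfl
  | succ q =>
    simp only [kB, LinearMap.mem_range]
    constructor
    · rintro ⟨c, hc⟩
      refine ⟨exz c, hg'_succ.2 (exz_hg c), ?_⟩
      refine hg_ext hF ((exz_hg c).dk y) ?_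
      rw [← kd_rsz, rsz_exz, hc]
    · rintro ⟨k, hk, rfl⟩
      exact ⟨rsz q k, kd_rsz y q k⟩

theorem castHk_mk {p : ℕ} {y z : Fin s → R} (h : y = z) (f : KM M s p) (hf : f ∈ kZ y M p)
    (hf' : f ∈ kZ z M p) :
    castHk M p h (Submodule.Quotient.mk ⟨f, hf⟩) = Submodule.Quotient.mk ⟨f, hf'⟩ := by
  subst h; rfl

theorem ktH_mk (x : Fin s → R) (p : ℕ) {u v : ℕ} (h : u ≤ v) (f : KM M s p)
    (hf : f ∈ kZ (fun j => x j ^ (u + 1)) M p) :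
    ktH x M p u v h (Submodule.Quotient.mk ⟨f, hf⟩) =
      Submodule.Quotient.mk ⟨kt x (v - u) p f, kt_mem_kZ x h p f hf⟩ := rfl

theorem Hk_mk_eq {p : ℕ} {y : Fin s → R} (f g : KM M s p) (hf : f ∈ kZ y M p)
    (hg : g ∈ kZ y M p) :
    (Submodule.Quotient.mk ⟨f, hf⟩ : Hk y M p) = Submodule.Quotient.mk ⟨g, hg⟩ ↔
      f - g ∈ kB y M p := by
  rw [Submodule.Quotient.eq, Submodule.mem_comap, Submodule.mem_inf]
  constructor
  · exact fun h => h.1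
  · exact fun h => ⟨h, (kZ y M p).sub_mem hf hg⟩

theorem kt_kt (x : Fin s → R) (e e' p : ℕ) (f : KM M s p) :
    kt x e p (kt x e' p f) = kt x (e + e') p f := by
  funext t
  simp only [kt, LinearMap.coe_mk, AddHom.coe_mk, smul_smul, pow_add]

theorem kt_zero (x : Fin s → R) (p : ℕ) (f : KM M s p) : kt x 0 p f = f := by
  funext t
  simp [kt]

theorem ktH_system (x : Fin s → R) (p : ℕ) :
    DirectedSystem (fun u : ℕ => Hk (fun j => x j ^ (u + 1)) M p)
      (fun u v h => ktH x M p u v h) where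
  map_self u z := by
    obtain ⟨⟨f, hf⟩, rfl⟩ := Submodule.Quotient.mk_surjective _ z
    rw [ktH_mk, Hk_mk_eq, Nat.sub_self, kt_zero, sub_self]
    exact Submodule.zero_mem _
  map_map w v u huv hvw z := by
    obtain ⟨⟨f, hf⟩, rfl⟩ := Submodule.Quotient.mk_surjective _ z
    rw [ktH_mk, ktH_mk, ktH_mk, Hk_mk_eq, kt_kt, show w - v + (v - u) = w - u by omega, sub_self]
    exact Submodule.zero_mem _

theorem lambda_iff (x : Fin s → R) (p : ℕ) : LambdaSurj x M p ↔ PP M x p := by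
  have hx1 : (fun j => x j ^ (0 + 1)) = x := by funext j; simp
  constructor
  · intro h u F hF hD
    have hFZ : rsz p F ∈ kZ (fun j => x j ^ (u + 1)) M p := (rsz_mem_kZ hF).2 hD
    obtain ⟨c, hc⟩ := h (Module.DirectLimit.of R ℕ (fun u : ℕ => Hk (fun j => x j ^ (u + 1)) M p)
      (fun u v h => ktH x M p u v h) u (Submodule.Quotient.mk ⟨rsz p F, hFZ⟩))
    obtain ⟨⟨g, hgZ⟩, rfl⟩ := Submodule.Quotient.mk_surjective _ c
    have hgZ' : g ∈ kZ (fun j => x j ^ (0 + 1)) M p := by rw [hx1]; exact hgZ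
    rw [klambda, LinearMap.comp_apply, castHk_mk _ g hgZ hgZ',
      ← Module.DirectLimit.of_f (hij := Nat.zero_le u)] at hc
    haveI := ktH_system (M := M) x p
    obtain ⟨v, huv, hv⟩ := Module.DirectLimit.exists_eq_of_of_eq hc
    rw [ktH_mk, ktH_mk, ktH_mk, Hk_mk_eq, kt_kt] at hv
    have hgd : dk x (exz g) = 0 := by
      rw [← rsz_mem_kZ (exz_hg g), rsz_exz]; exact hgZ
    have h1 : kt x (v - u + (u - 0)) p g - kt x (v - u) p (rsz p F) =
        rsz p (tk x v (exz g) - tk x (v - u) F) := by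
      have := kt_rsz x v p (exz g)
      rw [rsz_exz] at this
      rw [show v - u + (u - 0) = v by omega, this]
      rfl
    rw [h1, rsz_mem_kB (((exz_hg g).tk x _).sub (hF.tk x _))] at hv
    obtain ⟨k, hk, hk'⟩ := hv
    refine ⟨v - u, exz g, -k, exz_hg g, hgd, fun t ht => ?_, ?_⟩
    · rw [Pi.neg_apply, hk t ht, neg_zero]
    · rw [show u + 1 + (v - u) = v + 1 by omega, show u + (v - u) = v by omega, map_neg, ← hk']
      abel
  · intro h z
    obtain ⟨u, c, rfl⟩ := Module.DirectLimit.exists_of z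
    obtain ⟨⟨f, hf⟩, rfl⟩ := Submodule.Quotient.mk_surjective _ c
    have hfd : dk (fun j => x j ^ (u + 1)) (exz f) = 0 := by
      rw [← rsz_mem_kZ (exz_hg f), rsz_exz]; exact hf
    obtain ⟨e, g, k, hgg, hgd, hk, heq⟩ := h u (exz f) (exz_hg f) hfd
    have hgZ : rsz p g ∈ kZ x M p := (rsz_mem_kZ hgg).2 hgd
    have hgZ' : rsz p g ∈ kZ (fun j => x j ^ (0 + 1)) M p := by rw [hx1]; exact hgZ
    refine ⟨Submodule.Quotient.mk ⟨rsz p g, hgZ⟩, ?_⟩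
    rw [klambda, LinearMap.comp_apply, castHk_mk _ (rsz p g) hgZ hgZ',
      ← Module.DirectLimit.of_f (i := 0) (hij := Nat.zero_le (u + e)),
      ← Module.DirectLimit.of_f (i := u) (hij := Nat.le_add_right u e)]
    congr 1
    rw [ktH_mk, ktH_mk, Hk_mk_eq]
    have h1 : kt x (u + e - 0) p (rsz p g) - kt x (u + e - u) p f =
        rsz p (tk x (u + e) g - tk x e (exz f)) := by
      have := kt_rsz x e p (exz f)
      rw [rsz_exz] at this
      rw [show u + e - u = e by omega, this]
      rfl
    rw [h1, rsz_mem_kB ((hgg.tk x _).sub ((exz_hg f).tk x _))]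
    refine ⟨-k, fun t ht => ?_, ?_⟩
    · rw [Pi.neg_apply, hk t ht, neg_zero]
    · rw [map_neg, show u + e + 1 = u + 1 + e by omega]
      rw [sub_eq_zero] at heq
      rw [← heq]
      abel

end LambdaBridge

/-- **Theorem 2.7.** Let `n` be a natural number. The following are equivalent:
(i) any `n` elements of every f-generating set `{x₁,…,x_s}` of `I` with respect to `M` with
`s ≥ n` form an unconditioned `I`-weak sequence on `M`;
(ii) there exists an f-generating set `{x₁,…,x_s}` of `I` with respect to `M` with `s ≥ n`
such that any `n` elements of it form an unconditioned `I`-weak sequence on `M`;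
(iii) there exists an f-generating set `{x₁,…,x_s}` of `I` with respect to `M` with `s ≥ n`
such that `λ^i_M : H^i(x₁,…,x_s; M) → H^i_I(M)` is surjective for all `0 ≤ i ≤ n-1`.
(An f-generating set of `I` with respect to `M` is a generating set of `I` forming an
unconditioned `I`-filter regular sequence on `M`.) -/
theorem theorem_2_7 [IsNoetherianRing R] (I : Ideal R)
    (M : Type) [AddCommGroup M] [Module R M] [Module.Finite R M] (n : ℕ) :
    ((∀ (s : ℕ) (x : Fin s → R), Ideal.span (Set.range x) = I →
        IsUncondFilterRegSeq I M x → n ≤ s →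
        ∀ g : Fin n → Fin s, Function.Injective g → IsUncondWeakSeq I M (x ∘ g)) ↔
      (∃ (s : ℕ) (x : Fin s → R), Ideal.span (Set.range x) = I ∧
        IsUncondFilterRegSeq I M x ∧ n ≤ s ∧
        ∀ g : Fin n → Fin s, Function.Injective g → IsUncondWeakSeq I M (x ∘ g))) ∧
    ((∃ (s : ℕ) (x : Fin s → R), Ideal.span (Set.range x) = I ∧
        IsUncondFilterRegSeq I M x ∧ n ≤ s ∧
        ∀ g : Fin n → Fin s, Function.Injective g → IsUncondWeakSeq I M (x ∘ g)) ↔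
      (∃ (s : ℕ) (x : Fin s → R), Ideal.span (Set.range x) = I ∧
        IsUncondFilterRegSeq I M x ∧ n ≤ s ∧
        ∀ i : ℕ, i < n → LambdaSurj x M i)) := by
  have hmem : ∀ {s : ℕ} {x : Fin s → R}, Ideal.span (Set.range x) = I → ∀ j, x j ∈ I :=
    fun hx j => hx ▸ Ideal.subset_span ⟨j, rfl⟩
  refine ⟨⟨?_, ?_⟩, ⟨?_, ?_⟩⟩
  · intro h
    obtain ⟨s, x, hx, hF, hns⟩ := exists_fgen (M := M) I n
    exact ⟨s, x, hx, uncond_iff_FR.2 hF, hns, h s x hx (uncond_iff_FR.2 hF) hns⟩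
  · rintro ⟨s, x, hx, hF, hns, h⟩ s' y hy hFy _ g hg
    have hF1 := uncond_iff_FR.1 hF
    have hF2 := uncond_iff_FR.1 hFy
    exact uncond_of_WW hF2
      (WW_indep x y hx hy hF1 hF2 hns (WW_of_uncond hns (hmem hx) h)) g hg
  · rintro ⟨s, x, hx, hF, hns, h⟩
    refine ⟨s, x, hx, hF, hns, fun i hi => (lambda_iff x i).2 ?_⟩
    exact PP_of_WW (hmem hx) (uncond_iff_FR.1 hF) (WW_of_uncond hns (hmem hx) h) hns i hi
  · rintro ⟨s, x, hx, hF, hns, h⟩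
    refine ⟨s, x, hx, hF, hns, fun g hg => ?_⟩
    exact uncond_of_WW (uncond_iff_FR.1 hF)
      (WW_of_PP hx (uncond_iff_FR.1 hF) fun i hi => (lambda_iff x i).1 (h i hi)) g hg
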